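/- Let L be a completely distributive commutative subspace lattice on a complex separable Hilbert space H and let Φ : Alg L → Alg L be a linear map that is continuous with respect to the weak operator topology and rank preserving, and such that every element of F is consistent with respect to Φ. Assume further that F = 𝔊_N for some N ∈ F (i.e., Alg L is irreducible). Then there exist densely defined linear transformations U and V on H such that Φ(A) = U A V* for all A ∈ Alg L, in the sense that: (i) Φ(x⊗f*) = (Ux)⊗(Vf)* whenever x ∈ dom U, f ∈ dom V, and x ∈ M, f ∈ M₋^⊥ for some M ∈ F; and (ii) ⟨Φ(A)h, k⟩ = ⟨A(V*h), U*k⟩ for every A ∈ Alg L, every h in the domain of V*, and every k in the domain of U*. -/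

import Mathlib

open scoped InnerProductSpace

noncomputable section

/-- The join (closed linear span) of a family of subspaces of a Hilbert space. -/
def closedJoin {H : Type*} [NormedAddCommGroup H] [InnerProductSpace ℂ H]
    (S : Set (Submodule ℂ H)) : Submodule ℂ H :=
  (sSup S).topologicalClosure

/-- A subspace lattice on `H`: a family of closed subspaces containing `{0}` and `H`,
closed under arbitrary intersections and arbitrary closed linear spans. -/
structure IsSubspaceLattice {H : Type*} [NormedAddCommGroup H] [InnerProductSpace ℂ H]
    (L : Set (Submodule ℂ H)) : Prop where
  isClosed : ∀ E ∈ L, IsClosed (E : Set H)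
  bot_mem : ⊥ ∈ L
  top_mem : ⊤ ∈ L
  sInf_mem : ∀ S : Set (Submodule ℂ H), S ⊆ L → sInf S ∈ L
  join_mem : ∀ S : Set (Submodule ℂ H), S ⊆ L → closedJoin S ∈ L

/-- `M₋`: the join of all members of `L` that do not contain `M`. -/
def minus {H : Type*} [NormedAddCommGroup H] [InnerProductSpace ℂ H]
    (L : Set (Submodule ℂ H)) (M : Submodule ℂ H) : Submodule ℂ H :=
  closedJoin {E | E ∈ L ∧ ¬ M ≤ E}

open Classical in
/-- The orthogonal projection of `H` onto a closed subspace `E`, as an operator on `H`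
(junk value `0` if `E` is not closed). -/
def projOf {H : Type*} [NormedAddCommGroup H] [InnerProductSpace ℂ H] [CompleteSpace H]
    (E : Submodule ℂ H) : H →L[ℂ] H :=
  if h : IsClosed (E : Set H) then
    haveI : CompleteSpace E := h.completeSpace_coe
    E.subtypeL.comp E.orthogonalProjectionOnto
  else 0

/-- A commutative subspace lattice: the orthogonal projections onto members commute. -/
structure IsCSL {H : Type*} [NormedAddCommGroup H] [InnerProductSpace ℂ H] [CompleteSpace H]
    (L : Set (Submodule ℂ H)) extends IsSubspaceLattice L : Prop where
  commutes : ∀ E ∈ L, ∀ F ∈ L, projOf E * projOf F = projOf F * projOf E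

/-- Complete distributivity of the lattice `L` (meets are intersections, joins are
closed linear spans). -/
def IsCompletelyDistributive {H : Type*} [NormedAddCommGroup H] [InnerProductSpace ℂ H]
    (L : Set (Submodule ℂ H)) : Prop :=
  ∀ (I : Type) (J : I → Type) (E : (i : I) → J i → Submodule ℂ H),
    (∀ i j, E i j ∈ L) →
     ((⨅ i, closedJoin (Set.range (E i)))
        = closedJoin (Set.range fun φ : (∀ i, J i) => ⨅ i, E i (φ i)))
    ∧ (closedJoin (Set.range fun i => ⨅ j, E i j)
        = ⨅ φ : (∀ i, J i), closedJoin (Set.range fun i => E i (φ i)))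

/-- `Alg L`: all bounded operators leaving every member of `L` invariant. -/
def algL {H : Type*} [NormedAddCommGroup H] [InnerProductSpace ℂ H]
    (L : Set (Submodule ℂ H)) : Set (H →L[ℂ] H) :=
  {T | ∀ E ∈ L, ∀ x ∈ E, T x ∈ E}

/-- The rank one operator `x ⊗ f* : h ↦ ⟨h, f⟩ x`. -/
def rankOne {H : Type*} [NormedAddCommGroup H] [InnerProductSpace ℂ H]
    (x f : H) : H →L[ℂ] H :=
  (innerSL ℂ f).smulRight x

/-- The rank of a bounded operator: the dimension of its range. -/
def opRank {H : Type*} [NormedAddCommGroup H] [InnerProductSpace ℂ H]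
    (T : H →L[ℂ] H) : Cardinal :=
  Module.rank ℂ (LinearMap.range (T : H →ₗ[ℂ] H))

/-- `Φ` is a linear map of `Alg L` into itself. -/
structure IsLinearOnAlg {H : Type*} [NormedAddCommGroup H] [InnerProductSpace ℂ H]
    (L : Set (Submodule ℂ H)) (Φ : (H →L[ℂ] H) → (H →L[ℂ] H)) : Prop where
  maps : ∀ A ∈ algL L, Φ A ∈ algL L
  map_add : ∀ A ∈ algL L, ∀ B ∈ algL L, Φ (A + B) = Φ A + Φ B
  map_smul : ∀ (c : ℂ), ∀ A ∈ algL L, Φ (c • A) = c • Φ A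

/-- `Φ` preserves the rank of every finite rank operator in `Alg L`. -/
def RankPreserving {H : Type*} [NormedAddCommGroup H] [InnerProductSpace ℂ H]
    (L : Set (Submodule ℂ H)) (Φ : (H →L[ℂ] H) → (H →L[ℂ] H)) : Prop :=
  ∀ A ∈ algL L, opRank A < Cardinal.aleph0 → opRank (Φ A) = opRank A

/-- `a ∼ b`: (nonzero) vectors `a` and `b` are linearly dependent. -/
def Dep {H : Type*} [NormedAddCommGroup H] [InnerProductSpace ℂ H] (a b : H) : Prop :=
  ∃ c : ℂ, c ≠ 0 ∧ b = c • a

/-- `N` is consistent with respect to `Φ`. -/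
def Consistent {H : Type*} [NormedAddCommGroup H] [InnerProductSpace ℂ H]
    (L : Set (Submodule ℂ H)) (Φ : (H →L[ℂ] H) → (H →L[ℂ] H))
    (N : Submodule ℂ H) : Prop :=
  N ≠ ⊥ ∧ minus L N ≠ ⊤ ∧
    ∃ (U : N →ₗ[ℂ] H) (V : ((minus L N)ᗮ : Submodule ℂ H) →ₗ[ℂ] H),
      ∀ (x : N) (f : ((minus L N)ᗮ : Submodule ℂ H)),
        Φ (rankOne (x : H) (f : H)) = rankOne (U x) (V f)

/-- `N` is twisted with respect to `Φ`. -/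
def Twisted {H : Type*} [NormedAddCommGroup H] [InnerProductSpace ℂ H]
    (L : Set (Submodule ℂ H)) (Φ : (H →L[ℂ] H) → (H →L[ℂ] H))
    (N : Submodule ℂ H) : Prop :=
  N ≠ ⊥ ∧ minus L N ≠ ⊤ ∧
    ∃ (U : ((minus L N)ᗮ : Submodule ℂ H) →ₗ⋆[ℂ] H) (V : N →ₗ⋆[ℂ] H),
      ∀ (x : N) (f : ((minus L N)ᗮ : Submodule ℂ H)),
        Φ (rankOne (x : H) (f : H)) = rankOne (U f) (V x)

/-- `N` is isolated: `dim N = 1` and `N^⊥ ∈ L`. -/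
def Isolated {H : Type*} [NormedAddCommGroup H] [InnerProductSpace ℂ H]
    (L : Set (Submodule ℂ H)) (N : Submodule ℂ H) : Prop :=
  Module.rank ℂ N = 1 ∧ Nᗮ ∈ L

/-- The family `F` of all `N ∈ L` with `N ≠ {0}` and `N₋ ≠ H`. -/
def famF {H : Type*} [NormedAddCommGroup H] [InnerProductSpace ℂ H]
    (L : Set (Submodule ℂ H)) : Set (Submodule ℂ H) :=
  {N | N ∈ L ∧ N ≠ ⊥ ∧ minus L N ≠ ⊤}

/-- Subspaces are comparable if one contains the other. -/
def Comparable' {H : Type*} [NormedAddCommGroup H] [InnerProductSpace ℂ H]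
    (M N : Submodule ℂ H) : Prop :=
  M ≤ N ∨ N ≤ M

/-- There is a chain in `F` from `M` to `N`. -/
def ChainConn {H : Type*} [NormedAddCommGroup H] [InnerProductSpace ℂ H]
    (L : Set (Submodule ℂ H)) (M N : Submodule ℂ H) : Prop :=
  ∃ (n : ℕ) (c : Fin (n + 1) → Submodule ℂ H),
    (∀ k, c k ∈ famF L) ∧ c 0 = M ∧ c (Fin.last n) = N ∧
      ∀ k : Fin n, Comparable' (c k.castSucc) (c k.succ)

/-- `𝔊_N`: all members of `F` that can be connected to `N` by a chain. -/
def GSet {H : Type*} [NormedAddCommGroup H] [InnerProductSpace ℂ H]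
    (L : Set (Submodule ℂ H)) (N : Submodule ℂ H) : Set (Submodule ℂ H) :=
  {M | M ∈ famF L ∧ ChainConn L N M}

end


/-- `Φ` is continuous on `Alg L` with respect to the weak operator topology. -/
def WOTContinuousOn {H : Type*} [NormedAddCommGroup H] [InnerProductSpace ℂ H]
    (L : Set (Submodule ℂ H)) (Φ : (H →L[ℂ] H) → (H →L[ℂ] H)) : Prop :=
  ContinuousOn
    (fun A : H →WOT[ℂ] H =>
      ContinuousLinearMapWOT.ofCLM (Φ (ContinuousLinearMapWOT.toCLM A)))
    (ContinuousLinearMapWOT.ofCLM '' algL L)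

section PartA

variable {H : Type*} [NormedAddCommGroup H] [InnerProductSpace ℂ H]

lemma aux_le_join {S : Set (Submodule ℂ H)} {E : Submodule ℂ H} (h : E ∈ S) :
    E ≤ closedJoin S :=
  (le_sSup h).trans (Submodule.le_topologicalClosure _)

lemma aux_join_le {S : Set (Submodule ℂ H)} {E : Submodule ℂ H} (hE : IsClosed (E : Set H))
    (h : ∀ F ∈ S, F ≤ E) : closedJoin S ≤ E :=
  Submodule.topologicalClosure_minimal _ (sSup_le h) hE

lemma aux_minus_mem {L : Set (Submodule ℂ H)} (hL : IsSubspaceLattice L) (M : Submodule ℂ H) :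
    minus L M ∈ L :=
  hL.join_mem _ (fun _ h => h.1)

lemma aux_le_minus {L : Set (Submodule ℂ H)} {M E : Submodule ℂ H} (hE : E ∈ L)
    (h : ¬ M ≤ E) : E ≤ minus L M :=
  aux_le_join ⟨hE, h⟩

lemma aux_minus_mono {L : Set (Submodule ℂ H)} (hL : IsSubspaceLattice L)
    {M N : Submodule ℂ H} (h : M ≤ N) : minus L M ≤ minus L N :=
  aux_join_le (hL.isClosed _ (aux_minus_mem hL N))
    (fun _ hF => aux_le_minus hF.1 (fun h' => hF.2 (h.trans h')))

lemma aux_rankOne_apply (x f h : H) : rankOne x f h = (inner ℂ f h : ℂ) • x := by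
  simp [rankOne]

lemma aux_rankOne_mem {L : Set (Submodule ℂ H)} {M : Submodule ℂ H} {x f : H}
    (hx : x ∈ M) (hf : f ∈ (minus L M)ᗮ) : rankOne x f ∈ algL L := by
  intro E hE y hy
  rw [aux_rankOne_apply]
  by_cases h : M ≤ E
  · exact E.smul_mem _ (h hx)
  · have := aux_le_minus hE h hy
    rw [Submodule.inner_left_of_mem_orthogonal this hf]
    simp

lemma aux_inf_mem {L : Set (Submodule ℂ H)} (hL : IsSubspaceLattice L) {M N : Submodule ℂ H}
    (hM : M ∈ L) (hN : N ∈ L) : M ⊓ N ∈ L := by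
  have := hL.sInf_mem {M, N} (by rintro _ (rfl | rfl) <;> assumption)
  rwa [sInf_pair] at this

lemma aux_famF_inf {L : Set (Submodule ℂ H)} (hL : IsSubspaceLattice L) {M N : Submodule ℂ H}
    (hM : M ∈ famF L) (hN : N ∈ famF L) (h : M ⊓ N ≠ ⊥) : M ⊓ N ∈ famF L :=
  ⟨aux_inf_mem hL hM.1 hN.1, h, fun h' => hM.2.2 (top_le_iff.1
    (h' ▸ aux_minus_mono hL inf_le_left))⟩

lemma aux_minus_join {L : Set (Submodule ℂ H)} (hL : IsSubspaceLattice L) {M N : Submodule ℂ H} :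
    (minus L M)ᗮ ⊓ (minus L N)ᗮ ≤ (minus L (closedJoin {M, N}))ᗮ := by
  rw [Submodule.inf_orthogonal]
  have : minus L (closedJoin {M, N}) ≤ (minus L M ⊔ minus L N).topologicalClosure := by
    apply aux_join_le (Submodule.isClosed_topologicalClosure _)
    rintro E ⟨hE, h⟩
    refine le_trans ?_ (Submodule.le_topologicalClosure _)
    by_cases h1 : M ≤ E
    · refine le_trans (aux_le_minus hE fun h2 => h ?_) le_sup_right
      exact aux_join_le (hL.isClosed _ hE) (by rintro _ (rfl | rfl) <;> assumption)
    · exact (aux_le_minus hE h1).trans le_sup_left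
  refine le_trans ?_ (Submodule.orthogonal_le this)
  rw [Submodule.orthogonal_closure]

lemma aux_famF_join {L : Set (Submodule ℂ H)} (hL : IsSubspaceLattice L) {M N : Submodule ℂ H}
    (hM : M ∈ famF L) (hN : N ∈ famF L) (h : (minus L M)ᗮ ⊓ (minus L N)ᗮ ≠ ⊥) :
    closedJoin {M, N} ∈ famF L := by
  refine ⟨hL.join_mem _ (by rintro _ (rfl | rfl); exacts [hM.1, hN.1]), ?_, ?_⟩
  · intro h'
    have : M ≤ closedJoin {M, N} := aux_le_join (by simp)
    rw [h'] at this
    exact hM.2.1 (le_bot_iff.1 this)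
  · intro h'
    have := aux_minus_join (M := M) (N := N) hL
    rw [h'] at this
    simp at this
    exact h this

/-! complete distributivity -/

lemma aux_small [TopologicalSpace.SeparableSpace H] : Small.{0} H := by
  obtain ⟨u, hu⟩ := TopologicalSpace.exists_dense_seq H
  refine small_of_injective (β := ℕ → ℝ) (f := fun x n => dist x (u n)) ?_
  intro x y hxy
  by_contra hne
  have hd : 0 < dist x y := dist_pos.2 hne
  obtain ⟨n, hn⟩ := hu.exists_dist_lt x (half_pos hd)
  have h1 := congrFun hxy n
  simp only at h1
  have := dist_triangle_right x y (u n)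
  linarith

lemma aux_cd1 [TopologicalSpace.SeparableSpace H] {L : Set (Submodule ℂ H)}
    (hL : IsSubspaceLattice L) (hcd : IsCompletelyDistributive L) {E : Submodule ℂ H}
    (hE : E ∈ L) {x : H} (hx : ∀ M ∈ L, ¬ M ≤ E → x ∈ minus L M) : x ∈ E := by
  have : Small.{0} H := aux_small
  have : Small.{0} (Submodule ℂ H) :=
    small_of_injective (SetLike.coe_injective (A := Submodule ℂ H) (B := H))
  let I := {M : Submodule ℂ H // M ∈ L ∧ ¬ M ≤ E}
  let J : I → Type _ := fun i => {G : Submodule ℂ H // G ∈ L ∧ ¬ i.1 ≤ G}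
  let eI := equivShrink.{0} I
  have h := (hcd (Shrink.{0} I) (fun i => Shrink.{0} (J (eI.symm i)))
    (fun i j => ((equivShrink.{0} (J (eI.symm i))).symm j).1)
    (fun i j => ((equivShrink.{0} (J (eI.symm i))).symm j).2.1)).1
  have h1 : x ∈ ⨅ i : Shrink.{0} I, closedJoin (Set.range
      (fun j : Shrink.{0} (J (eI.symm i)) => ((equivShrink.{0} (J (eI.symm i))).symm j).1)) := by
    rw [Submodule.mem_iInf]
    intro i
    have := hx (eI.symm i).1 (eI.symm i).2.1 (eI.symm i).2.2
    refine (?_ : minus L (eI.symm i).1 ≤ _) this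
    apply aux_join_le (Submodule.isClosed_topologicalClosure _)
    intro G hG
    apply aux_le_join
    exact ⟨equivShrink.{0} (J (eI.symm i)) ⟨G, hG⟩, by simp⟩
  rw [h] at h1
  refine (aux_join_le (hL.isClosed E hE) ?_ : _ ≤ E) h1
  rintro _ ⟨φ, rfl⟩
  by_contra hcon
  set G0 := ⨅ i, ((equivShrink.{0} (J (eI.symm i))).symm (φ i)).1 with hG0
  have hG0L : G0 ∈ L := hL.sInf_mem _ (by
    rintro _ ⟨i, rfl⟩
    exact ((equivShrink.{0} (J (eI.symm i))).symm (φ i)).2.1)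
  let i0 : Shrink.{0} I := eI ⟨G0, hG0L, hcon⟩
  have h2 := ((equivShrink.{0} (J (eI.symm i0))).symm (φ i0)).2.2
  apply h2
  have h3 : (eI.symm i0).1 = G0 := by simp [i0]
  exact h3.le.trans (iInf_le _ i0)

lemma aux_dense_V [TopologicalSpace.SeparableSpace H] {L : Set (Submodule ℂ H)}
    (hL : IsSubspaceLattice L) (hcd : IsCompletelyDistributive L) {x : H}
    (hx : ∀ M ∈ famF L, x ∈ minus L M) : x = 0 := by
  have := aux_cd1 hL hcd hL.bot_mem (x := x) (fun M hM h => by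
    by_cases h' : minus L M = ⊤
    · rw [h']; trivial
    · exact hx M ⟨hM, fun h0 => h (h0 ▸ le_rfl), h'⟩)
  simpa using this

lemma aux_dense_U [TopologicalSpace.SeparableSpace H] {L : Set (Submodule ℂ H)}
    (hL : IsSubspaceLattice L) (hcd : IsCompletelyDistributive L) :
    closedJoin (famF L) = ⊤ := by
  by_contra hne
  have hW : closedJoin (famF L) ∈ L := hL.join_mem _ (fun M hM => hM.1)
  apply hne
  rw [eq_top_iff]
  intro x _
  refine aux_cd1 hL hcd hW (fun M hM h => ?_)
  by_cases h' : minus L M = ⊤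
  · rw [h']; trivial
  · have hMF : M ∈ famF L := ⟨hM, by rintro rfl; exact h bot_le, h'⟩
    exact absurd (aux_le_join hMF) h

variable [CompleteSpace H]

lemma aux_projOf {E : Submodule ℂ H} (h : IsClosed (E : Set H)) :
    ∃ _ : E.HasOrthogonalProjection, projOf E = E.starProjection := by
  have : CompleteSpace E := h.completeSpace_coe
  exact ⟨inferInstance, by simp [projOf, h]; rfl⟩

lemma aux_proj_mem {E : Submodule ℂ H} (h : IsClosed (E : Set H)) (x : H) : projOf E x ∈ E := by
  obtain ⟨_, h'⟩ := aux_projOf h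
  rw [h']; exact Submodule.starProjection_apply_mem _ _

lemma aux_proj_self {E : Submodule ℂ H} (h : IsClosed (E : Set H)) {x : H} :
    projOf E x = x ↔ x ∈ E := by
  obtain ⟨_, h'⟩ := aux_projOf h
  rw [h']; exact Submodule.starProjection_eq_self_iff

lemma aux_proj_zero {E : Submodule ℂ H} (h : IsClosed (E : Set H)) {x : H} :
    projOf E x = 0 ↔ x ∈ Eᗮ := by
  obtain ⟨_, h'⟩ := aux_projOf h
  rw [h']; exact Submodule.starProjection_apply_eq_zero_iff (K := E)

lemma aux_proj_sub {E : Submodule ℂ H} (h : IsClosed (E : Set H)) (x : H) :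
    x - projOf E x ∈ Eᗮ := by
  obtain ⟨_, h'⟩ := aux_projOf h
  rw [h']; exact Submodule.sub_starProjection_mem_orthogonal (K := E) x

lemma aux_proj_symm {E : Submodule ℂ H} (h : IsClosed (E : Set H)) (x y : H) :
    (inner ℂ (projOf E x) y : ℂ) = inner ℂ x (projOf E y) := by
  obtain ⟨_, h'⟩ := aux_projOf h
  rw [h']; exact Submodule.inner_starProjection_left_eq_right _ _ _

lemma aux_comm {L : Set (Submodule ℂ H)} (hL : IsCSL L) {E F : Submodule ℂ H}
    (hE : E ∈ L) (hF : F ∈ L) (x : H) : projOf E (projOf F x) = projOf F (projOf E x) := by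
  have := congrArg (fun T : H →L[ℂ] H => T x) (hL.commutes E hE F hF)
  simpa using this

lemma aux_proj_mem' {L : Set (Submodule ℂ H)} (hL : IsCSL L) {E F : Submodule ℂ H}
    (hE : E ∈ L) (hF : F ∈ L) {x : H} (hx : x ∈ F) : projOf E x ∈ F := by
  rw [← aux_proj_self (hL.isClosed F hF), ← aux_comm hL hE hF,
    (aux_proj_self (hL.isClosed F hF)).2 hx]

lemma aux_proj_mem_orth {L : Set (Submodule ℂ H)} (hL : IsCSL L) {E F : Submodule ℂ H}
    (hE : E ∈ L) (hF : F ∈ L) {x : H} (hx : x ∈ Fᗮ) : projOf E x ∈ Fᗮ := by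
  rw [← aux_proj_zero (hL.isClosed F hF), ← aux_comm hL hE hF,
    (aux_proj_zero (hL.isClosed F hF)).2 hx, map_zero]

lemma aux_orth_of_inf {L : Set (Submodule ℂ H)} (hL : IsCSL L) {E F : Submodule ℂ H}
    (hE : E ∈ L) (hF : F ∈ L) (h : E ⊓ F = ⊥) {x y : H} (hx : x ∈ E) (hy : y ∈ F) :
    (inner ℂ x y : ℂ) = 0 := by
  have h1 : projOf E y ∈ E ⊓ F := ⟨aux_proj_mem (hL.isClosed E hE) y, aux_proj_mem' hL hE hF hy⟩
  rw [h, Submodule.mem_bot, aux_proj_zero (hL.isClosed E hE)] at h1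
  exact Submodule.inner_right_of_mem_orthogonal hx h1

lemma aux_orth_of_inf' {L : Set (Submodule ℂ H)} (hL : IsCSL L) {E F : Submodule ℂ H}
    (hE : E ∈ L) (hF : F ∈ L) (h : Eᗮ ⊓ Fᗮ = ⊥) {x y : H} (hx : x ∈ Eᗮ) (hy : y ∈ Fᗮ) :
    (inner ℂ x y : ℂ) = 0 := by
  have h1 : y - projOf E y ∈ Eᗮ ⊓ Fᗮ := ⟨aux_proj_sub (hL.isClosed E hE) y,
    Submodule.sub_mem _ hy (aux_proj_mem_orth hL hE hF hy)⟩
  rw [h, Submodule.mem_bot, sub_eq_zero] at h1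
  rw [h1]
  exact Submodule.inner_left_of_mem_orthogonal (aux_proj_mem (hL.isClosed E hE) y) hx

end PartA

section PartB

variable {H : Type*} [NormedAddCommGroup H] [InnerProductSpace ℂ H]

lemma aux_dep1 {n : ℕ} (ξ η : Fin (n + 1) → H) (h : ¬ LinearIndependent ℂ ξ) :
    ∃ ξ' η' : Fin n → H, ∀ B : H →ₗ⋆[ℂ] H →ₗ[ℂ] ℂ,
      ∑ k, B (η' k) (ξ' k) = ∑ i, B (η i) (ξ i) := by
  obtain ⟨g, hg, j, hj⟩ := Fintype.not_linearIndependent_iff.1 h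
  refine ⟨fun k => ξ (j.succAbove k),
    fun k => η (j.succAbove k) - (starRingEnd ℂ (g (j.succAbove k) / g j)) • η j, fun B => ?_⟩
  rw [Fin.sum_univ_succAbove _ j] at hg
  rw [Fin.sum_univ_succAbove _ j]
  have h1 := congrArg (B (η j)) hg
  simp only [map_add, map_sum, map_smul, map_zero, smul_eq_mul] at h1
  simp only [map_sub, LinearMap.sub_apply, LinearMap.map_smulₛₗ, LinearMap.smul_apply,
    smul_eq_mul, Finset.sum_sub_distrib, starRingEnd_self_apply, RingHomCompTriple.comp_apply,
    RingHom.id_apply]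
  have h2 : ∑ x, g (j.succAbove x) / g j * (B (η j)) (ξ (j.succAbove x))
      = (∑ x, g (j.succAbove x) * (B (η j)) (ξ (j.succAbove x))) / g j := by
    rw [Finset.sum_div]
    exact Finset.sum_congr rfl (fun _ _ => by ring)
  rw [h2, eq_neg_of_add_eq_zero_right h1]
  field_simp
  ring

lemma aux_dep2 {n : ℕ} (ξ η : Fin (n + 1) → H) (h : ¬ LinearIndependent ℂ η) :
    ∃ ξ' η' : Fin n → H, ∀ B : H →ₗ⋆[ℂ] H →ₗ[ℂ] ℂ,
      ∑ k, B (η' k) (ξ' k) = ∑ i, B (η i) (ξ i) := by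
  obtain ⟨g, hg, j, hj⟩ := Fintype.not_linearIndependent_iff.1 h
  refine ⟨fun k => ξ (j.succAbove k) - (starRingEnd ℂ (g (j.succAbove k) / g j)) • ξ j,
    fun k => η (j.succAbove k), fun B => ?_⟩
  rw [Fin.sum_univ_succAbove _ j] at hg
  rw [Fin.sum_univ_succAbove _ j]
  have h1 := congrArg (fun v => B v (ξ j)) hg
  simp only [map_add, map_sum, LinearMap.map_smulₛₗ, map_zero, smul_eq_mul, LinearMap.add_apply,
    LinearMap.sum_apply, LinearMap.smul_apply, LinearMap.zero_apply] at h1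
  simp only [map_sub, map_smul, smul_eq_mul, Finset.sum_sub_distrib]
  have hj' : starRingEnd ℂ (g j) ≠ 0 := by simpa using hj
  have h2 : ∑ x, (starRingEnd ℂ) (g (j.succAbove x) / g j) * (B (η (j.succAbove x))) (ξ j)
      = (∑ x, (starRingEnd ℂ) (g (j.succAbove x)) * (B (η (j.succAbove x))) (ξ j))
        / starRingEnd ℂ (g j) := by
    rw [Finset.sum_div]
    exact Finset.sum_congr rfl (fun _ _ => by rw [map_div₀]; ring)
  rw [h2, eq_neg_of_add_eq_zero_right h1]
  field_simp
  ring

/-- The annihilation hypothesis. -/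
def AuxAnn (L : Set (Submodule ℂ H)) {n : ℕ} (ξ η : Fin n → H) : Prop :=
  ∀ M ∈ L, ∀ y ∈ M, ∀ f ∈ (minus L M)ᗮ, ∑ i, (inner ℂ f (ξ i) : ℂ) * inner ℂ (η i) y = 0

/-- auxiliary sesquilinear form -/
noncomputable def auxForm (f y : H) : H →ₗ⋆[ℂ] H →ₗ[ℂ] ℂ :=
  LinearMap.mk₂'ₛₗ (starRingEnd ℂ) (RingHom.id ℂ)
    (fun η ξ => (inner ℂ f ξ : ℂ) * inner ℂ η y)
    (fun a b c => by rw [inner_add_left]; ring)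
    (fun a b c => by rw [inner_smul_left]; simp; ring)
    (fun a b c => by rw [inner_add_right]; ring)
    (fun a b c => by rw [inner_smul_right]; simp; ring)

lemma aux_ann_transfer {L : Set (Submodule ℂ H)} {n m : ℕ} {ξ η : Fin n → H} {ξ' η' : Fin m → H}
    (h : ∀ B : H →ₗ⋆[ℂ] H →ₗ[ℂ] ℂ, ∑ k, B (η' k) (ξ' k) = ∑ i, B (η i) (ξ i))
    (hA : AuxAnn L ξ η) : AuxAnn L ξ' η' := by
  intro M hM y hy f hf
  have := h (auxForm f y)
  simp only [auxForm, LinearMap.mk₂'ₛₗ_apply] at this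
  rw [this]
  exact hA M hM y hy f hf

variable [CompleteSpace H]

/-- Operators commuting with all the projections. -/
def AuxCent (L : Set (Submodule ℂ H)) : Set (H →L[ℂ] H) :=
  {D | ∀ E ∈ L, ∀ x, D (projOf E x) = projOf E (D x)}

lemma aux_cent_mem {L : Set (Submodule ℂ H)} (hL : IsCSL L) {D : H →L[ℂ] H} (hD : D ∈ AuxCent L)
    {E : Submodule ℂ H} (hE : E ∈ L) {x : H} (hx : x ∈ E) : D x ∈ E := by
  rw [← aux_proj_self (hL.isClosed E hE), ← hD E hE, (aux_proj_self (hL.isClosed E hE)).2 hx]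

lemma aux_ann_left {L : Set (Submodule ℂ H)} (hL : IsCSL L) {n : ℕ} {ξ η : Fin n → H}
    (hA : AuxAnn L ξ η) {D : H →L[ℂ] H} (hD : D ∈ AuxCent L) :
    AuxAnn L (fun i => D (ξ i)) η := by
  intro M hM y hy f hf
  have := hA M hM y hy (ContinuousLinearMap.adjoint D f) (by
    rw [Submodule.mem_orthogonal]
    intro m hm
    rw [ContinuousLinearMap.adjoint_inner_right]
    exact Submodule.inner_right_of_mem_orthogonal
      (aux_cent_mem hL hD (aux_minus_mem hL.toIsSubspaceLattice M) hm) hf)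
  simpa [ContinuousLinearMap.adjoint_inner_left] using this

lemma aux_ann_right {L : Set (Submodule ℂ H)} (hL : IsCSL L) {n : ℕ} {ξ η : Fin n → H}
    (hA : AuxAnn L ξ η) {E : Submodule ℂ H} (hE : E ∈ L) :
    AuxAnn L ξ (fun i => projOf E (η i)) := by
  intro M hM y hy f hf
  simp only [aux_proj_symm (hL.isClosed E hE)]
  exact hA M hM _ (aux_proj_mem' hL hE hM hy) f hf

lemma aux_proj_cent {L : Set (Submodule ℂ H)} (hL : IsCSL L) {E : Submodule ℂ H} (hE : E ∈ L) :
    projOf E ∈ AuxCent L := fun _ hF x => aux_comm hL hE hF x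

lemma aux_proj_cent' {L : Set (Submodule ℂ H)} (hL : IsCSL L) {E : Submodule ℂ H} (hE : E ∈ L) :
    1 - projOf E ∈ AuxCent L := by
  intro F hF x
  simp [aux_comm hL hE hF x]

lemma aux_cent_mul {L : Set (Submodule ℂ H)} {A B : H →L[ℂ] H}
    (hA : A ∈ AuxCent L) (hB : B ∈ AuxCent L) : A * B ∈ AuxCent L := by
  intro F hF x
  simp [hA F hF, hB F hF]

/-- dichotomy -/
lemma aux_dichotomy {L : Set (Submodule ℂ H)} (hL : IsCSL L) {n : ℕ}
    (IH : ∀ ξ η : Fin n → H, AuxAnn L ξ η → ∑ i, (inner ℂ (η i) (ξ i) : ℂ) = 0)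
    (ξ η : Fin (n + 1) → H) (hA : AuxAnn L ξ η) {M : Submodule ℂ H} (hM : M ∈ L) :
    (∀ D ∈ AuxCent L, ∑ i, (inner ℂ (η i) (D (projOf M (ξ i))) : ℂ) = 0) ∨
    (∀ D ∈ AuxCent L, ∑ i, (inner ℂ (η i) (D ((1 - projOf (minus L M)) (ξ i))) : ℂ) = 0) := by
  have hMm := aux_minus_mem hL.toIsSubspaceLattice M
  have hMc := hL.isClosed M hM
  have hMmc := hL.isClosed _ hMm
  by_cases h1 : LinearIndependent ℂ (fun i => (1 - projOf (minus L M)) (ξ i))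
  · by_cases h2 : LinearIndependent ℂ (fun i => projOf M (η i))
    · exfalso
      have h3 : ∀ y ∈ M, ∀ i, (inner ℂ (η i) y : ℂ) = 0 := by
        intro y hy
        apply Fintype.linearIndependent_iff.1 h1 (fun i => (inner ℂ (η i) y : ℂ))
        set w := ∑ i, (inner ℂ (η i) y : ℂ) • (1 - projOf (minus L M)) (ξ i) with hw
        have hwm : w ∈ (minus L M)ᗮ := by
          refine Submodule.sum_mem _ (fun i _ => Submodule.smul_mem _ _ ?_)
          simpa using aux_proj_sub hMmc (ξ i)
        have h4 := hA M hM y hy w hwm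
        rw [← inner_self_eq_zero (𝕜 := ℂ)]
        nth_rewrite 2 [hw]
        rw [inner_sum, ← h4]
        refine Finset.sum_congr rfl (fun i _ => ?_)
        rw [inner_smul_right, mul_comm]
        congr 1
        simp only [ContinuousLinearMap.sub_apply, ContinuousLinearMap.one_apply, inner_sub_right]
        rw [Submodule.inner_left_of_mem_orthogonal (aux_proj_mem hMmc _) hwm, sub_zero]
      have h5 := h3 (projOf M (η 0)) (aux_proj_mem hMc _) 0
      apply h2.ne_zero 0
      rw [← inner_self_eq_zero (𝕜 := ℂ), aux_proj_symm hMc,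
        (aux_proj_self hMc).2 (aux_proj_mem hMc _), h5]
    · left
      intro D hD
      have hA' := aux_ann_right hL (aux_ann_left hL hA hD) hM
      obtain ⟨ξ', η', h⟩ := aux_dep2 (fun i => D (ξ i)) (fun i => projOf M (η i)) h2
      have := IH ξ' η' (aux_ann_transfer h hA')
      have h' := h (innerₛₗ ℂ)
      simp only [innerₛₗ_apply_apply] at h'
      rw [h'] at this
      rw [← this]
      refine Finset.sum_congr rfl (fun i _ => ?_)
      rw [aux_proj_symm hMc, hD M hM]
  · right
    intro D hD
    have hA' := aux_ann_left hL (aux_ann_left hL hA (aux_proj_cent' hL hMm)) hD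
    obtain ⟨ξ', η', h⟩ := aux_dep1 (fun i => D ((1 - projOf (minus L M)) (ξ i))) η
      (fun hli => h1 (LinearIndependent.of_comp (D : H →ₗ[ℂ] H) hli))
    have := IH ξ' η' (aux_ann_transfer h hA')
    have h' := h (innerₛₗ ℂ)
    simp only [innerₛₗ_apply_apply] at h'
    rw [h'] at this
    exact this

theorem aux_trace [TopologicalSpace.SeparableSpace H] {L : Set (Submodule ℂ H)} (hL : IsCSL L)
    (hcd : IsCompletelyDistributive L) {n : ℕ} :
    ∀ ξ η : Fin n → H, AuxAnn L ξ η → ∑ i, (inner ℂ (η i) (ξ i) : ℂ) = 0 := by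
  induction n with
  | zero => intro ξ η _; simp
  | succ n IH =>
    intro ξ η hA
    let toE : (Fin (n + 1) → H) → PiLp 2 (fun _ : Fin (n + 1) => H) := fun v => WithLp.toLp 2 v
    let S : Submodule ℂ (PiLp 2 (fun _ : Fin (n + 1) => H)) :=
      Submodule.span ℂ {z | ∃ D ∈ AuxCent L, z = toE (fun i => D (ξ i))}
    have memS : ∀ w : PiLp 2 (fun _ : Fin (n + 1) => H), w ∈ Sᗮ ↔
        ∀ D ∈ AuxCent L, ∑ i, (inner ℂ (w i) (D (ξ i)) : ℂ) = 0 := by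
      intro w
      constructor
      · intro hw D hD
        have := Submodule.inner_left_of_mem_orthogonal (𝕜 := ℂ) (K := S)
          (Submodule.subset_span ⟨D, hD, rfl⟩) hw
        simpa [toE, PiLp.inner_apply] using this
      · intro h
        rw [Submodule.mem_orthogonal']
        intro u hu
        induction hu using Submodule.span_induction with
        | mem x hx =>
          obtain ⟨D, hD, rfl⟩ := hx
          simpa [toE, PiLp.inner_apply] using h D hD
        | zero => simp
        | add x y _ _ hx hy => rw [inner_add_right, hx, hy, add_zero]
        | smul a x _ hx => rw [inner_smul_right, hx, mul_zero]
    have hcSo : CompleteSpace (Sᗮ : Submodule ℂ _) := (Submodule.isClosed_orthogonal S).completeSpace_coe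
    have hpSo : (Sᗮ : Submodule ℂ _).HasOrthogonalProjection := Submodule.HasOrthogonalProjection.ofCompleteSpace _
    let η1 := Sᗮ.starProjection (toE η)
    let η2 := toE η - η1
    have hη1 : η1 ∈ Sᗮ := Submodule.starProjection_apply_mem _ _
    have hη2 : η2 ∈ Sᗮᗮ := Submodule.sub_starProjection_mem_orthogonal (K := Sᗮ) _
    have key : ∀ Q : H →L[ℂ] H, Q ∈ AuxCent L →
        (∀ x y, (inner ℂ (Q x) y : ℂ) = inner ℂ x (Q y)) →
        (∀ D ∈ AuxCent L, ∑ i, (inner ℂ (η i) (D (Q (ξ i))) : ℂ) = 0) →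
        (∀ D ∈ AuxCent L, ∀ x, D (Q x) = Q (D x)) →
        ∀ i, Q (η2 i) = 0 := by
      intro Q hQ hsym h0 hcomm
      have inv : ∀ w ∈ Sᗮ, toE (fun i => Q (w i)) ∈ Sᗮ := by
        intro w hw
        rw [memS] at hw ⊢
        intro D hD
        have := hw (Q * D) (aux_cent_mul hQ hD)
        simpa [toE, hsym] using this
      have inv2 : ∀ w ∈ Sᗮᗮ, toE (fun i => Q (w i)) ∈ Sᗮᗮ := by
        intro w hw
        rw [Submodule.mem_orthogonal']
        intro u hu
        have := Submodule.inner_left_of_mem_orthogonal (inv u hu) hw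
        simpa [toE, PiLp.inner_apply, hsym] using this
      have h1 : toE (fun i => Q (η i)) ∈ Sᗮ := by
        rw [memS]
        intro D hD
        rw [← h0 D hD]
        refine Finset.sum_congr rfl (fun i _ => ?_)
        simp only [toE]
        rw [hsym, hcomm D hD]
      have h2 : toE (fun i => Q (η2 i)) ∈ Sᗮ := by
        have : toE (fun i => Q (η2 i)) = toE (fun i => Q (η i)) - toE (fun i => Q (η1 i)) := by
          ext i
          simp [toE, η2]
        rw [this]
        exact Submodule.sub_mem _ h1 (inv _ hη1)
      have h3 : toE (fun i => Q (η2 i)) = 0 := by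
        rw [← inner_self_eq_zero (𝕜 := ℂ)]
        exact Submodule.inner_right_of_mem_orthogonal h2 (inv2 _ hη2)
      intro i
      have := congrArg (fun z : PiLp 2 (fun _ : Fin (n + 1) => H) => z i) h3
      simpa [toE] using this
    have dich : ∀ M ∈ L, (∀ i, projOf M (η2 i) = 0) ∨ (∀ i, η2 i ∈ minus L M) := by
      intro M hM
      have hMm := aux_minus_mem hL.toIsSubspaceLattice M
      have hMc := hL.isClosed M hM
      have hMmc := hL.isClosed _ hMm
      rcases aux_dichotomy hL IH ξ η hA hM with h | h
      · left
        exact key _ (aux_proj_cent hL hM) (aux_proj_symm hMc) h (fun D hD x => hD M hM x)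
      · right
        have := key _ (aux_proj_cent' hL hMm) (fun x y => by
          simp [inner_sub_left, inner_sub_right, aux_proj_symm hMmc]) h
          (fun D hD x => by simp [hD _ hMm])
        intro i
        have h' := this i
        rw [ContinuousLinearMap.sub_apply, sub_eq_zero] at h'
        exact (aux_proj_self hMmc).1 h'.symm
    have hη2z : ∀ i, η2 i = 0 := by
      intro i
      let E := closedJoin {M | M ∈ L ∧ ∀ i, projOf M (η2 i) = 0}
      have hE : E ∈ L := hL.join_mem _ (fun _ h => h.1)
      have hle : ∀ M ∈ L, (∀ i, projOf M (η2 i) = 0) → M ≤ E := fun M hM h =>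
        aux_le_join (S := {M | M ∈ L ∧ ∀ i, projOf M (η2 i) = 0}) ⟨hM, h⟩
      have h1 : η2 i ∈ E := by
        refine aux_cd1 hL.toIsSubspaceLattice hcd hE (fun M hM hME => ?_)
        rcases dich M hM with h | h
        · exact absurd (hle M hM h) hME
        · exact h i
      have h2 : E ≤ (Submodule.span ℂ {η2 i})ᗮ := by
        refine aux_join_le (Submodule.isClosed_orthogonal _) ?_
        rintro M ⟨hM, h⟩ x hx
        rw [Submodule.mem_orthogonal_singleton_iff_inner_left]
        exact Submodule.inner_right_of_mem_orthogonal hx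
          ((aux_proj_zero (hL.isClosed M hM)).1 (h i))
      have h3 := h2 h1
      rw [Submodule.mem_orthogonal_singleton_iff_inner_left] at h3
      exact inner_self_eq_zero.1 h3
    have hη : toE η ∈ Sᗮ := by
      have : toE η = η1 := by
        have h0 : η2 = 0 := by ext i; exact hη2z i
        exact sub_eq_zero.1 h0
      rw [this]; exact hη1
    have := (memS _).1 hη 1 (by intro E _ x; rfl)
    simpa [toE] using this

end PartB

section PartC

variable {H : Type*} [NormedAddCommGroup H] [InnerProductSpace ℂ H]

theorem aux_alg_zero (L : Set (Submodule ℂ H)) : (0 : H →L[ℂ] H) ∈ algL L :=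
  fun E _ x _ => by simp

theorem aux_alg_add {L : Set (Submodule ℂ H)} {A B : H →L[ℂ] H} (hA : A ∈ algL L)
    (hB : B ∈ algL L) : A + B ∈ algL L :=
  fun E hE x hx => by simpa using E.add_mem (hA E hE x hx) (hB E hE x hx)

theorem aux_alg_smul {L : Set (Submodule ℂ H)} {A : H →L[ℂ] H} (c : ℂ) (hA : A ∈ algL L) :
    c • A ∈ algL L :=
  fun E hE x hx => by simpa using E.smul_mem c (hA E hE x hx)

theorem aux_alg_sum {L : Set (Submodule ℂ H)} {ι : Type*} (s : Finset ι) (A : ι → H →L[ℂ] H)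
    (hA : ∀ i, A i ∈ algL L) : ∑ i ∈ s, A i ∈ algL L := by
  classical
  induction s using Finset.induction_on with
  | empty => simpa using aux_alg_zero L
  | insert a s ha ih => rw [Finset.sum_insert ha]; exact aux_alg_add (hA a) ih

theorem aux_phi_zero {L : Set (Submodule ℂ H)} {Φ : (H →L[ℂ] H) → (H →L[ℂ] H)}
    (hlin : IsLinearOnAlg L Φ) : Φ 0 = 0 := by
  have := hlin.map_smul 0 0 (aux_alg_zero L)
  simpa using this

theorem aux_phi_sum {L : Set (Submodule ℂ H)} {Φ : (H →L[ℂ] H) → (H →L[ℂ] H)}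
    (hlin : IsLinearOnAlg L Φ) {ι : Type*} (s : Finset ι) (A : ι → H →L[ℂ] H)
    (hA : ∀ i, A i ∈ algL L) : Φ (∑ i ∈ s, A i) = ∑ i ∈ s, Φ (A i) := by
  classical
  induction s using Finset.induction_on with
  | empty => simpa using aux_phi_zero hlin
  | insert a s ha ih =>
    rw [Finset.sum_insert ha, Finset.sum_insert ha, hlin.map_add _ (hA a) _ (aux_alg_sum s A hA), ih]

/-- coordinates map -/
noncomputable def auxG {n : ℕ} (v : Fin n → H) : H →ₗ[ℂ] (Fin n → ℂ) :=
  LinearMap.pi (fun k => ((innerSL ℂ (v k) : H →L[ℂ] ℂ) : H →ₗ[ℂ] ℂ))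

theorem auxG_apply {n : ℕ} (v : Fin n → H) (h : H) (k : Fin n) :
    auxG v h k = inner ℂ (v k) h := rfl

theorem aux_fact {n : ℕ} (w v : Fin n → H) :
    ((∑ k, rankOne (w k) (v k) : H →L[ℂ] H) : H →ₗ[ℂ] H)
      = (Fintype.linearCombination ℂ w) ∘ₗ auxG v := by
  ext h
  simp [Fintype.linearCombination_apply, auxG_apply, aux_rankOne_apply]

theorem aux_opRank_iff {n : ℕ} (w v : Fin n → H) :
    opRank (∑ k, rankOne (w k) (v k)) = n ↔
      (LinearMap.range (auxG v) = ⊤ ∧ LinearIndependent ℂ w) := by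
  unfold opRank
  rw [aux_fact, LinearMap.range_comp]
  have hlow : ∀ P : Submodule ℂ (Fin n → ℂ), Module.rank ℂ (P.map (Fintype.linearCombination ℂ w))
      = (Module.finrank ℂ (P.map (Fintype.linearCombination ℂ w)) : Cardinal) := fun P =>
    (Module.finrank_eq_rank _ _).symm
  rw [hlow, Nat.cast_inj]
  have hLI : LinearIndependent ℂ w ↔ LinearMap.ker (Fintype.linearCombination ℂ w) = ⊥ := by
    rw [LinearMap.ker_eq_bot']
    rw [Fintype.linearIndependent_iff]
    constructor
    · intro h m hm
      ext i
      exact h m (by simpa [Fintype.linearCombination_apply] using hm) i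
    · intro h g hg i
      have := h g (by simpa [Fintype.linearCombination_apply] using hg)
      simp [this]
  constructor
  · intro h
    have h1 : Module.finrank ℂ (LinearMap.range (auxG v)) = n := by
      apply le_antisymm
      · simpa using Submodule.finrank_le (LinearMap.range (auxG v))
      · exact h.symm.le.trans
          (Submodule.finrank_map_le (Fintype.linearCombination ℂ w) (LinearMap.range (auxG v)))
    have h2 : LinearMap.range (auxG v) = ⊤ := by
      apply Submodule.eq_top_of_finrank_eq
      simpa using h1
    refine ⟨h2, ?_⟩
    rw [hLI]
    rw [h2, Submodule.map_top] at h
    have h3 := LinearMap.finrank_range_add_finrank_ker (Fintype.linearCombination ℂ w)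
    rw [h, Module.finrank_fin_fun] at h3
    exact Submodule.finrank_eq_zero.1 (by omega)
  · rintro ⟨h1, h2⟩
    rw [h1, Submodule.map_top]
    have h3 := LinearMap.finrank_range_add_finrank_ker (Fintype.linearCombination ℂ w)
    rw [hLI.1 h2, Module.finrank_fin_fun, finrank_bot] at h3
    omega

theorem aux_opRank_fin {n : ℕ} (w v : Fin n → H) :
    opRank (∑ k, rankOne (w k) (v k)) < Cardinal.aleph0 := by
  unfold opRank
  rw [aux_fact, LinearMap.range_comp]
  exact Module.rank_lt_aleph0 _ _

theorem auxG_surj {n : ℕ} (f : Fin n → H) (hf : ∀ k, f k ≠ 0)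
    (ho : ∀ k l, k ≠ l → inner ℂ (f k) (f l) = 0) : LinearMap.range (auxG f) = ⊤ := by
  rw [LinearMap.range_eq_top]
  intro y
  refine ⟨∑ k, (y k / inner ℂ (f k) (f k)) • f k, ?_⟩
  ext l
  rw [auxG_apply, inner_sum]
  rw [Finset.sum_eq_single l]
  · rw [inner_smul_right, div_mul_cancel₀]
    simpa using hf l
  · intro b _ hb
    rw [inner_smul_right, ho _ _ hb.symm, mul_zero]
  · simp

theorem aux_cyclic {L : Set (Submodule ℂ H)} {Φ : (H →L[ℂ] H) → (H →L[ℂ] H)}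
    (hlin : IsLinearOnAlg L Φ) (hrank : RankPreserving L Φ) {m : ℕ}
    (x f u v : Fin (m + 1) → H) (a : Fin (m + 1) → ℂ)
    (hx : ∀ k, x k ≠ 0) (hf : ∀ k, f k ≠ 0)
    (hxo : ∀ k l, k ≠ l → inner ℂ (x k) (x l) = 0)
    (hfo : ∀ k l, k ≠ l → inner ℂ (f k) (f l) = 0)
    (h1 : ∀ k, rankOne (x k) (f k) ∈ algL L)
    (h2 : ∀ k, rankOne (x (k + 1)) (f k) ∈ algL L)
    (e1 : ∀ k, Φ (rankOne (x k) (f k)) = rankOne (u k) (v k))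
    (e2 : ∀ k, Φ (rankOne (x (k + 1)) (f k)) = rankOne (a k • u (k + 1)) (v k))
    (ha : ∀ k, k ≠ Fin.last m → a k = 1) : a (Fin.last m) = 1 := by
  by_contra hc
  have hfG := auxG_surj f hf hfo
  have hxL : LinearIndependent ℂ x := linearIndependent_of_ne_zero_of_inner_eq_zero hx
    (fun k l hkl => hxo k l hkl)
  have hB : Φ (∑ k, rankOne (x k) (f k)) = ∑ k, rankOne (u k) (v k) := by
    rw [aux_phi_sum hlin _ _ h1]
    exact Finset.sum_congr rfl (fun k _ => e1 k)
  have hBr := hrank _ (aux_alg_sum Finset.univ _ h1) (aux_opRank_fin x f)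
  rw [hB, (aux_opRank_iff x f).2 ⟨hfG, hxL⟩] at hBr
  obtain ⟨hvG, huL⟩ := (aux_opRank_iff u v).1 hBr
  have hsub : ∀ p q g : H, rankOne (p - q) g = rankOne p g + (-1 : ℂ) • rankOne q g := by
    intro p q g
    ext h
    simp [aux_rankOne_apply, smul_sub, sub_eq_add_neg]
  have h3 : ∀ k, rankOne (x k - x (k + 1)) (f k) ∈ algL L := fun k => by
    rw [hsub]; exact aux_alg_add (h1 k) (aux_alg_smul _ (h2 k))
  have hA : Φ (∑ k, rankOne (x k - x (k + 1)) (f k))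
      = ∑ k, rankOne (u k - a k • u (k + 1)) (v k) := by
    rw [aux_phi_sum hlin _ _ h3]
    refine Finset.sum_congr rfl (fun k _ => ?_)
    rw [hsub, hsub, hlin.map_add _ (h1 k) _ (aux_alg_smul _ (h2 k)), hlin.map_smul _ _ (h2 k),
      e1, e2]
  have hwL : LinearIndependent ℂ (fun k => u k - a k • u (k + 1)) := by
    rw [Fintype.linearIndependent_iff] at huL ⊢
    intro z hz
    have hz' : ∑ k, (z k - z (k - 1) * a (k - 1)) • u k = 0 := by
      rw [← hz]
      simp only [sub_smul, smul_sub, Finset.sum_sub_distrib]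
      congr 1
      rw [← Equiv.sum_comp (Equiv.addRight (1 : Fin (m + 1)))]
      refine Finset.sum_congr rfl (fun k _ => ?_)
      simp [mul_smul]
    have hr : ∀ k, z (k + 1) = z k * a k := by
      intro k
      have := huL _ hz' (k + 1)
      simpa [sub_eq_zero] using this
    have hconst : ∀ k, z k = z 0 := by
      intro k
      induction k using Fin.induction with
      | zero => rfl
      | succ i ih =>
        have h := hr i.castSucc
        rw [ha _ (Fin.castSucc_lt_last i).ne, mul_one, ih] at h
        rw [← h]
        congr 1
        simp
    have h0 := hr (Fin.last m)
    rw [Fin.last_add_one, hconst (Fin.last m)] at h0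
    have hz0 : z 0 = 0 := by
      by_contra hne
      apply hc
      have : z 0 * 1 = z 0 * a (Fin.last m) := by rw [mul_one]; exact h0
      exact (mul_left_cancel₀ hne this).symm
    intro k
    rw [hconst k, hz0]
  have hAr := hrank _ (aux_alg_sum Finset.univ _ h3) (aux_opRank_fin _ f)
  rw [hA, (aux_opRank_iff _ v).2 ⟨hvG, hwL⟩] at hAr
  obtain ⟨-, hd⟩ := (aux_opRank_iff _ f).1 hAr.symm
  rw [Fintype.linearIndependent_iff] at hd
  have := hd (fun _ => 1) (by
    simp only [one_smul, Finset.sum_sub_distrib]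
    rw [sub_eq_zero]
    exact (Equiv.sum_comp (Equiv.addRight (1 : Fin (m + 1))) x).symm) 0
  exact one_ne_zero this

end PartC


section PartD

variable {H : Type*} [NormedAddCommGroup H] [InnerProductSpace ℂ H]

/-- A frame: a member of `F` with linear maps implementing `Φ` on it. -/
structure AuxFrame (L : Set (Submodule ℂ H)) (Φ : (H →L[ℂ] H) → (H →L[ℂ] H)) where
  M : Submodule ℂ H
  mem : M ∈ famF L
  W : H →ₗ[ℂ] H
  V : H →ₗ[ℂ] H
  eq : ∀ x ∈ M, ∀ f ∈ (minus L M)ᗮ, Φ (rankOne x f) = rankOne (W x) (V f)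

/-- The standing assumptions. -/
structure AuxCtx [CompleteSpace H] (L : Set (Submodule ℂ H)) (Φ : (H →L[ℂ] H) → (H →L[ℂ] H)) :
    Prop where
  hL : IsCSL L
  hlin : IsLinearOnAlg L Φ
  hrank : RankPreserving L Φ
  hcons : ∀ N ∈ famF L, Consistent L Φ N

variable [CompleteSpace H] {L : Set (Submodule ℂ H)} {Φ : (H →L[ℂ] H) → (H →L[ℂ] H)}

theorem aux_exists_x {M : Submodule ℂ H} (hM : M ∈ famF L) : ∃ x ∈ M, x ≠ 0 :=
  (Submodule.ne_bot_iff _).1 hM.2.1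

theorem aux_exists_f (hL : IsCSL L) {M : Submodule ℂ H} (hM : M ∈ famF L) :
    ∃ f ∈ (minus L M)ᗮ, f ≠ 0 := by
  refine (Submodule.ne_bot_iff _).1 (fun h => hM.2.2 ?_)
  have hc := hL.isClosed _ (aux_minus_mem hL.toIsSubspaceLattice M)
  have : CompleteSpace (minus L M) := hc.completeSpace_coe
  exact (Submodule.orthogonal_eq_bot_iff).1 h

theorem aux_frame_ne (hC : AuxCtx L Φ) (p : AuxFrame L Φ) {x f : H} (hx : x ∈ p.M)
    (hf : f ∈ (minus L p.M)ᗮ) (hx0 : x ≠ 0) (hf0 : f ≠ 0) : p.W x ≠ 0 ∧ p.V f ≠ 0 := by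
  have h1 := aux_rankOne_mem (L := L) hx hf
  have e := p.eq x hx f hf
  have hs : rankOne x f = ∑ k : Fin 1, rankOne ((fun _ => x : Fin 1 → H) k) ((fun _ => f : Fin 1 → H) k) := by
    simp
  have h2 := hC.hrank _ h1 (by rw [hs]; exact aux_opRank_fin _ _)
  have h3 : opRank (rankOne x f) = (1 : ℕ) := by
    rw [hs]
    refine (aux_opRank_iff _ _).2 ⟨auxG_surj _ (fun _ => hf0)
      (fun k l hkl => absurd (Subsingleton.elim k l) hkl), ?_⟩
    exact linearIndependent_of_ne_zero_of_inner_eq_zero (fun _ => hx0)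
      (fun k l hkl => absurd (Subsingleton.elim k l) hkl)
  have h4 : Φ (rankOne x f) ≠ 0 := by
    intro h0
    rw [h0, h3] at h2
    simp [opRank] at h2
  rw [e] at h4
  constructor
  · intro h; apply h4; ext z; simp [aux_rankOne_apply, h]
  · intro h; apply h4; ext z; simp [aux_rankOne_apply, h]

theorem aux_frame_W_ne (hC : AuxCtx L Φ) (p : AuxFrame L Φ) {x : H} (hx : x ∈ p.M)
    (hx0 : x ≠ 0) : p.W x ≠ 0 := by
  obtain ⟨f, hf, hf0⟩ := aux_exists_f hC.hL p.mem
  exact (aux_frame_ne hC p hx hf hx0 hf0).1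

theorem aux_frame_V_ne (hC : AuxCtx L Φ) (p : AuxFrame L Φ) {f : H} (hf : f ∈ (minus L p.M)ᗮ)
    (hf0 : f ≠ 0) : p.V f ≠ 0 := by
  obtain ⟨x, hx, hx0⟩ := aux_exists_x p.mem
  exact (aux_frame_ne hC p hx hf hx0 hf0).2

theorem aux_orth_le (hC : AuxCtx L Φ) {M N : Submodule ℂ H} (h : M ≤ N) :
    (minus L N)ᗮ ≤ (minus L M)ᗮ :=
  Submodule.orthogonal_le (aux_minus_mono hC.hL.toIsSubspaceLattice h)

theorem aux_scalar (hC : AuxCtx L Φ) (p q : AuxFrame L Φ) (h : p.M ≤ q.M) :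
    ∃ c : ℂ, c ≠ 0 ∧ ∀ x ∈ p.M, q.W x = c • p.W x := by
  obtain ⟨f, hf, hf0⟩ := aux_exists_f hC.hL q.mem
  have hv := aux_frame_V_ne hC q hf hf0
  have hvv : inner ℂ (q.V f) (q.V f) ≠ (0 : ℂ) := by simpa using hv
  have key : ∀ x ∈ p.M, q.W x =
      ((inner ℂ (p.V f) (q.V f) : ℂ) / inner ℂ (q.V f) (q.V f)) • p.W x := by
    intro x hx
    have e := (q.eq x (h hx) f hf).symm.trans (p.eq x hx f (aux_orth_le hC h hf))
    have e' := congrArg (fun T : H →L[ℂ] H => T (q.V f)) e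
    simp only [aux_rankOne_apply] at e'
    rw [div_eq_inv_mul, mul_smul, ← e', smul_smul, inv_mul_cancel₀ hvv, one_smul]
  refine ⟨_, ?_, key⟩
  intro h0
  obtain ⟨x, hx, hx0⟩ := aux_exists_x p.mem
  apply aux_frame_W_ne hC q (h hx) hx0
  rw [key x hx, h0, zero_smul]

/-- Compatible frames. -/
def AuxCompat (p q : AuxFrame L Φ) : Prop :=
  Comparable' p.M q.M ∧ ∀ x ∈ p.M, x ∈ q.M → p.W x = q.W x

theorem AuxCompat.symm' {p q : AuxFrame L Φ} (h : AuxCompat p q) : AuxCompat q p :=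
  ⟨h.1.symm, fun x hx hy => (h.2 x hy hx).symm⟩

theorem aux_compat_refl (p : AuxFrame L Φ) : AuxCompat p p :=
  ⟨Or.inl le_rfl, fun _ _ _ => rfl⟩

theorem aux_agree_le (hC : AuxCtx L Φ) {p q : AuxFrame L Φ} (h : p.M ≤ q.M) {x : H}
    (hx : x ∈ p.M) (hx0 : x ≠ 0) (e : p.W x = q.W x) : AuxCompat p q := by
  obtain ⟨c, hc0, hc⟩ := aux_scalar hC p q h
  have h1 : c = 1 := by
    have := hc x hx
    rw [← e] at this
    have h2 : (c - 1) • p.W x = 0 := by rw [sub_smul, one_smul, ← this, sub_self]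
    rcases smul_eq_zero.1 h2 with h | h
    · exact sub_eq_zero.1 h
    · exact absurd h (aux_frame_W_ne hC p hx hx0)
  refine ⟨Or.inl h, fun y hy _ => ?_⟩
  rw [hc y hy, h1, one_smul]

theorem aux_agree (hC : AuxCtx L Φ) {p q : AuxFrame L Φ} (h : Comparable' p.M q.M) {x : H}
    (hx : x ∈ p.M) (hx' : x ∈ q.M) (hx0 : x ≠ 0) (e : p.W x = q.W x) : AuxCompat p q := by
  rcases h with h | h
  · exact aux_agree_le hC h hx hx0 e
  · exact (aux_agree_le hC h hx' hx0 e.symm).symm'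

theorem aux_triangle (hC : AuxCtx L Φ) {a b c : AuxFrame L Φ} (h1 : AuxCompat a b)
    (h2 : AuxCompat b c) (h : Comparable' a.M c.M) : AuxCompat a c := by
  have : ∃ x, x ∈ a.M ∧ x ∈ b.M ∧ x ∈ c.M ∧ x ≠ 0 := by
    obtain ⟨xa, ha, ha0⟩ := aux_exists_x a.mem
    obtain ⟨xb, hb, hb0⟩ := aux_exists_x b.mem
    obtain ⟨xc, hc, hc0⟩ := aux_exists_x c.mem
    rcases h1.1 with k1 | k1 <;> rcases h2.1 with k2 | k2 <;> rcases h with k | k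
    · exact ⟨xa, ha, k1 ha, k ha, ha0⟩
    · exact ⟨xa, ha, k1 ha, k2 (k1 ha), ha0⟩
    · exact ⟨xa, ha, k1 ha, k ha, ha0⟩
    · exact ⟨xc, k hc, k2 hc, hc, hc0⟩
    · exact ⟨xb, k1 hb, hb, k2 hb, hb0⟩
    · exact ⟨xb, k1 hb, hb, k2 hb, hb0⟩
    · exact ⟨xc, k1 (k2 hc), k2 hc, hc, hc0⟩
    · exact ⟨xc, k hc, k2 hc, hc, hc0⟩
  obtain ⟨x, ha, hb, hc, h0⟩ := this
  exact aux_agree hC h ha hc h0 ((h1.2 x ha hb).trans (h2.2 x hb hc))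

theorem aux_frame_exists (hC : AuxCtx L Φ) {N : Submodule ℂ H} (hN : N ∈ famF L) :
    ∃ q : AuxFrame L Φ, q.M = N := by
  obtain ⟨-, -, U, V, h⟩ := hC.hcons N hN
  obtain ⟨W', hW⟩ := LinearMap.exists_extend U
  obtain ⟨V', hV⟩ := LinearMap.exists_extend V
  refine ⟨⟨N, hN, W', V', fun x hx f hf => ?_⟩, rfl⟩
  have e1 : W' x = U ⟨x, hx⟩ := by rw [← hW]; rfl
  have e2 : V' f = V ⟨f, hf⟩ := by rw [← hV]; rfl
  rw [e1, e2]
  exact h ⟨x, hx⟩ ⟨f, hf⟩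

/-- rescaled frame -/
noncomputable def auxRescale (q : AuxFrame L Φ) (c : ℂ) (hc : c ≠ 0) : AuxFrame L Φ where
  M := q.M
  mem := q.mem
  W := c • q.W
  V := (starRingEnd ℂ c⁻¹) • q.V
  eq := by
    intro x hx f hf
    rw [q.eq x hx f hf]
    ext z
    simp only [aux_rankOne_apply, LinearMap.smul_apply, inner_smul_left, smul_smul]
    congr 1
    simp
    field_simp

theorem aux_frame_exists' (hC : AuxCtx L Φ) (p : AuxFrame L Φ) {N : Submodule ℂ H}
    (hN : N ∈ famF L) (h : Comparable' p.M N) :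
    ∃ q : AuxFrame L Φ, q.M = N ∧ AuxCompat p q := by
  obtain ⟨q, rfl⟩ := aux_frame_exists hC hN
  have : ∃ c : ℂ, c ≠ 0 ∧ ∀ x ∈ p.M, x ∈ q.M → p.W x = c • q.W x := by
    rcases h with h | h
    · obtain ⟨c, hc0, hc⟩ := aux_scalar hC p q h
      refine ⟨c⁻¹, inv_ne_zero hc0, fun x hx _ => ?_⟩
      rw [hc x hx, smul_smul, inv_mul_cancel₀ hc0, one_smul]
    · obtain ⟨c, hc0, hc⟩ := aux_scalar hC q p h
      exact ⟨c, hc0, fun x _ hx => hc x hx⟩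
  obtain ⟨c, hc0, hc⟩ := this
  exact ⟨auxRescale q c hc0, rfl, h, fun x hx hx' => hc x hx hx'⟩

theorem aux_compat_V (hC : AuxCtx L Φ) {p q : AuxFrame L Φ} (h : AuxCompat p q) {f : H}
    (hf : f ∈ (minus L p.M)ᗮ) (hf' : f ∈ (minus L q.M)ᗮ) : p.V f = q.V f := by
  have : ∃ x, x ∈ p.M ∧ x ∈ q.M ∧ x ≠ 0 := by
    obtain ⟨xa, ha, ha0⟩ := aux_exists_x p.mem
    obtain ⟨xb, hb, hb0⟩ := aux_exists_x q.mem
    rcases h.1 with k | k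
    · exact ⟨xa, ha, k ha, ha0⟩
    · exact ⟨xb, k hb, hb, hb0⟩
  obtain ⟨x, hx, hx', hx0⟩ := this
  have e := (p.eq x hx f hf).symm.trans (q.eq x hx' f hf')
  rw [← h.2 x hx hx'] at e
  have hne := aux_frame_W_ne hC p hx hx0
  refine ext_inner_right ℂ (fun z => ?_)
  have e' := congrArg (fun T : H →L[ℂ] H => T z) e
  simp only [aux_rankOne_apply] at e'
  have hfin := smul_left_injective ℂ hne e'
  exact hfin

/-- `n`-step paths of compatible frames -/
def AuxPath : ℕ → AuxFrame L Φ → AuxFrame L Φ → Prop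
  | 0, a, b => a = b
  | n + 1, a, c => ∃ b, AuxPath n a b ∧ AuxCompat b c

theorem AuxPath.trans' {a b c : AuxFrame L Φ} {m n : ℕ} (h1 : AuxPath m a b) (h2 : AuxPath n b c) :
    AuxPath (m + n) a c := by
  induction n generalizing c with
  | zero => obtain rfl : b = c := h2; exact h1
  | succ n ih =>
    obtain ⟨d, hd, he⟩ := h2
    exact ⟨d, ih hd, he⟩

theorem AuxPath.one {a b : AuxFrame L Φ} (h : AuxCompat a b) : AuxPath 1 a b := ⟨a, rfl, h⟩

theorem AuxPath.sub {p : ℕ → AuxFrame L Φ} {n : ℕ} (h : ∀ i < n, AuxCompat (p i) (p (i + 1)))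
    {i : ℕ} (d : ℕ) (hd : i + d ≤ n) : AuxPath d (p i) (p (i + d)) := by
  induction d with
  | zero => rfl
  | succ d ih => exact ⟨p (i + d), ih (by omega), h _ (by omega)⟩

theorem AuxPath.fn {a b : AuxFrame L Φ} {n : ℕ} (h : AuxPath n a b) :
    ∃ p : ℕ → AuxFrame L Φ, p 0 = a ∧ p n = b ∧ ∀ i < n, AuxCompat (p i) (p (i + 1)) := by
  induction n generalizing b with
  | zero => exact ⟨fun _ => a, rfl, h, by simp⟩
  | succ n ih =>
    obtain ⟨d, hd, he⟩ := h
    obtain ⟨p, h0, h1, h2⟩ := ih hd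
    refine ⟨fun i => if i ≤ n then p i else b, by simp [h0], by simp, fun i hi => ?_⟩
    by_cases hin : i < n
    · have h3 : i ≤ n := hin.le
      have h4 : i + 1 ≤ n := hin
      simp only [h3, h4, if_true]
      exact h2 i hin
    · obtain rfl : i = n := by omega
      simpa [h1] using he

/-- A minimal bad cycle. -/
structure AuxBad (n : ℕ) (p : ℕ → AuxFrame L Φ) : Prop where
  hn : 3 ≤ n
  step : ∀ i < n, AuxCompat (p i) (p (i + 1))
  comp : Comparable' (p 0).M (p n).M
  bad : ¬ AuxCompat (p 0) (p n)
  IH : ∀ m < n, ∀ a b : AuxFrame L Φ, AuxPath m a b → Comparable' a.M b.M → AuxCompat a b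

theorem AuxBad.rev {n : ℕ} {p : ℕ → AuxFrame L Φ} (hb : AuxBad n p) :
    AuxBad n (fun i => p (n - i)) where
  hn := hb.hn
  step := by
    intro i hi
    have := (hb.step (n - (i + 1)) (by omega)).symm'
    rwa [show n - (i + 1) + 1 = n - i by omega] at this
  comp := by
    have h : Comparable' (p n).M (p 0).M := hb.comp.symm
    simpa using h
  bad := by
    intro h
    apply hb.bad
    simpa using h.symm'
  IH := hb.IH

theorem AuxBad.sub' {n : ℕ} {p : ℕ → AuxFrame L Φ} (hb : AuxBad n p) {i j : ℕ} (hij : i ≤ j)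
    (hj : j ≤ n) : AuxPath (j - i) (p i) (p j) := by
  have := AuxPath.sub hb.step (i := i) (j - i) (by omega)
  rwa [show i + (j - i) = j by omega] at this

theorem AuxBad.chord {n : ℕ} {p : ℕ → AuxFrame L Φ} (hb : AuxBad n p) {i j : ℕ} (hij : i + 2 ≤ j)
    (hj : j ≤ n) (hne : ¬ (i = 0 ∧ j = n)) : ¬ Comparable' (p i).M (p j).M := by
  intro hc
  have h1 := hb.IH (j - i) (by omega) _ _ (hb.sub' (by omega) hj) hc
  apply hb.bad
  have h2 := ((hb.sub' (i := 0) (j := i) (by omega) (by omega)).trans' (AuxPath.one h1)).trans'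
    (hb.sub' hj le_rfl)
  exact hb.IH _ (by omega) _ _ h2 hb.comp

theorem AuxBad.noK (hC : AuxCtx L Φ) {n : ℕ} {p : ℕ → AuxFrame L Φ} (hb : AuxBad n p) {i j : ℕ}
    (hij : i + 2 ≤ j) (hj : j ≤ n) (hne : ¬ (i = 0 ∧ j = n)) {K : Submodule ℂ H}
    (hK : K ∈ famF L) (k1 : Comparable' (p i).M K) (k2 : Comparable' K (p (i + 1)).M)
    (k3 : Comparable' K (p j).M) (k4 : j < n → Comparable' K (p (j + 1)).M)
    (k5 : j = n → Comparable' (p (i - 1)).M K) : False := by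
  obtain ⟨q, rfl, hq⟩ := aux_frame_exists' hC (p i) hK k1
  have h1 : AuxCompat q (p (i + 1)) := aux_triangle hC hq.symm' (hb.step i (by omega)) k2
  have h2 : AuxCompat q (p j) := hb.IH (1 + (j - (i + 1))) (by omega) _ _
    ((AuxPath.one h1).trans' (hb.sub' (by omega) hj)) k3
  apply hb.bad
  rcases hj.lt_or_eq with hlt | rfl
  · have h3 : AuxCompat q (p (j + 1)) := aux_triangle hC h2 (hb.step j hlt) (k4 hlt)
    have := (((hb.sub' (i := 0) (j := i) (by omega) (by omega)).trans' (AuxPath.one hq)).trans'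
      (AuxPath.one h3)).trans' (hb.sub' (show j + 1 ≤ n by omega) le_rfl)
    exact hb.IH _ (by omega) _ _ this hb.comp
  · have hi : 1 ≤ i := by
      rcases Nat.eq_zero_or_pos i with h | h
      · exact absurd ⟨h, rfl⟩ hne
      · exact h
    have hst := hb.step (i - 1) (by omega)
    rw [show i - 1 + 1 = i by omega] at hst
    have h3 : AuxCompat (p (i - 1)) q := aux_triangle hC hst hq (k5 rfl)
    have := ((hb.sub' (i := 0) (j := i - 1) (by omega) (by omega)).trans' (AuxPath.one h3)).trans'
      (AuxPath.one h2)
    exact hb.IH _ (by omega) _ _ this hb.comp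

theorem AuxBad.alt {n : ℕ} {p : ℕ → AuxFrame L Φ} (hb : AuxBad n p) (h0 : (p 0).M ≤ (p 1).M) :
    (∀ i < n, (i % 2 = 0 → (p i).M ≤ (p (i + 1)).M) ∧ (i % 2 = 1 → (p (i + 1)).M ≤ (p i).M)) ∧
    (p 0).M ≤ (p n).M ∧ n % 2 = 1 := by
  have hn := hb.hn
  have h1 : ∀ i < n, (i % 2 = 0 → (p i).M ≤ (p (i + 1)).M) ∧
      (i % 2 = 1 → (p (i + 1)).M ≤ (p i).M) := by
    intro i
    induction i with
    | zero => intro _; exact ⟨fun _ => h0, fun h => by simp at h⟩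
    | succ i ih =>
      intro hi
      obtain ⟨ih1, ih2⟩ := ih (by omega)
      have hch := hb.chord (i := i) (j := i + 1 + 1) (by omega) (by omega) (by omega)
      have hst := (hb.step (i + 1) hi).1
      constructor
      · intro hp
        rcases hst with h | h
        · exact h
        · exact absurd (Or.inr (h.trans (ih2 (by omega)))) hch
      · intro hp
        rcases hst with h | h
        · exact absurd (Or.inl ((ih1 (by omega)).trans h)) hch
        · exact h
  have h2 : (p 0).M ≤ (p n).M := by
    rcases hb.comp with h | h
    · exact h
    · exact absurd (Or.inr (h.trans h0)) (hb.chord (i := 1) (j := n) (by omega) le_rfl (by omega))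
  refine ⟨h1, h2, ?_⟩
  by_contra hpar
  have h3 := (h1 (n - 1) (by omega)).2 (by omega)
  rw [show n - 1 + 1 = n by omega] at h3
  exact hb.chord (i := 0) (j := n - 1) (by omega) (by omega) (by omega) (Or.inl (h2.trans h3))

end PartD


section PartE

variable {H : Type*} [NormedAddCommGroup H] [InnerProductSpace ℂ H]
variable [CompleteSpace H] {L : Set (Submodule ℂ H)} {Φ : (H →L[ℂ] H) → (H →L[ℂ] H)}

theorem AuxBad.orthX (hC : AuxCtx L Φ) {n : ℕ} {p : ℕ → AuxFrame L Φ} (hb : AuxBad n p)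
    (h0 : (p 0).M ≤ (p 1).M) {k l : ℕ} (hkl : k < l) (hl : 2 * l + 1 ≤ n) {x y : H}
    (hx : x ∈ (p (2 * k)).M) (hy : y ∈ (p (2 * l)).M) : inner ℂ x y = 0 := by
  obtain ⟨halt, -, -⟩ := hb.alt h0
  refine aux_orth_of_inf hC.hL (p (2 * k)).mem.1 (p (2 * l)).mem.1 ?_ hx hy
  by_contra hne
  have hK := aux_famF_inf hC.hL.toIsSubspaceLattice (p (2 * k)).mem (p (2 * l)).mem hne
  refine hb.noK hC (i := 2 * k) (j := 2 * l) (by omega) (by omega) (by omega) hK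
    (Or.inr inf_le_left) (Or.inl (inf_le_left.trans ((halt _ (by omega)).1 (by omega))))
    (Or.inl inf_le_right)
    (fun h => Or.inl (inf_le_right.trans ((halt _ (by omega)).1 (by omega)))) (by omega)

theorem AuxBad.orthF (hC : AuxCtx L Φ) {n : ℕ} {p : ℕ → AuxFrame L Φ} (hb : AuxBad n p)
    (h0 : (p 0).M ≤ (p 1).M) {k l : ℕ} (hkl : k < l) (hl : 2 * l + 1 ≤ n) {x y : H}
    (hx : x ∈ (minus L (p (2 * k + 1)).M)ᗮ) (hy : y ∈ (minus L (p (2 * l + 1)).M)ᗮ) :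
    inner ℂ x y = 0 := by
  obtain ⟨halt, -, -⟩ := hb.alt h0
  have hl' := hC.hL.toIsSubspaceLattice
  refine aux_orth_of_inf' hC.hL (aux_minus_mem hl' _) (aux_minus_mem hl' _) ?_ hx hy
  by_contra hne
  have hK := aux_famF_join hl' (p (2 * k + 1)).mem (p (2 * l + 1)).mem hne
  have j1 : (p (2 * k + 1)).M ≤ closedJoin {(p (2 * k + 1)).M, (p (2 * l + 1)).M} :=
    aux_le_join (by simp)
  have j2 : (p (2 * l + 1)).M ≤ closedJoin {(p (2 * k + 1)).M, (p (2 * l + 1)).M} :=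
    aux_le_join (by simp)
  refine hb.noK hC (i := 2 * k + 1) (j := 2 * l + 1) (by omega) (by omega) (by omega) hK
    (Or.inl j1) (Or.inr (le_trans ((halt _ (by omega)).2 (by omega)) j1))
    (Or.inr j2)
    (fun h => Or.inr (le_trans ((halt _ (by omega)).2 (by omega)) j2))
    (fun _ => Or.inl (le_trans ((halt (2 * k) (by omega)).1 (by omega)) j1))

theorem AuxBad.false1 (hC : AuxCtx L Φ) {n : ℕ} {p : ℕ → AuxFrame L Φ} (hb : AuxBad n p)
    (h0 : (p 0).M ≤ (p 1).M) : False := by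
  obtain ⟨halt, hle, hpar⟩ := hb.alt h0
  obtain ⟨m, rfl⟩ : ∃ m, n = 2 * m + 1 := ⟨n / 2, by omega⟩
  have hxs : ∀ k : Fin (m + 1), ∃ x ∈ (p (2 * k)).M, x ≠ 0 := fun k => aux_exists_x (p _).mem
  have hfs : ∀ k : Fin (m + 1), ∃ f ∈ (minus L (p (2 * k + 1)).M)ᗮ, f ≠ 0 :=
    fun k => aux_exists_f hC.hL (p _).mem
  choose x hx hx0 using hxs
  choose f hf hf0 using hfs
  obtain ⟨c, hc0, hc⟩ := aux_scalar hC _ _ hle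
  have hx1 : ∀ k : Fin (m + 1), x k ∈ (p (2 * k + 1)).M := fun k =>
    (halt _ (by omega)).1 (by omega) (hx k)
  have hx2 : ∀ k : Fin (m + 1), k ≠ Fin.last m → x (k + 1) ∈ (p (2 * k + 1 + 1)).M := by
    intro k hk
    have h1 : ((k + 1 : Fin (m + 1)) : ℕ) = k + 1 := by
      rw [Fin.val_add_one, if_neg hk]
    have := hx (k + 1)
    rw [h1] at this
    exact this
  have hlt : ∀ k : Fin (m + 1), k ≠ Fin.last m → (k : ℕ) < m := fun k hk =>
    Fin.val_lt_last hk
  have hx3 : ∀ k : Fin (m + 1), x (k + 1) ∈ (p (2 * k + 1)).M := by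
    intro k
    by_cases hk : k = Fin.last m
    · subst hk
      rw [Fin.last_add_one]
      exact hle (hx 0)
    · have := hlt k hk
      exact (halt _ (by omega)).2 (by omega) (hx2 k hk)
  have res := aux_cyclic hC.hlin hC.hrank x f (fun k => (p (2 * k)).W (x k))
    (fun k => (p (2 * k + 1)).V (f k)) (fun k => if k = Fin.last m then c else 1)
    hx0 hf0 ?_ ?_ ?_ ?_ ?_ ?_ ?_
  · simp only [if_true] at res
    apply hb.bad
    refine ⟨Or.inl hle, fun y hy _ => ?_⟩
    rw [hc y hy, res, one_smul]
  · intro k l hkl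
    rcases lt_or_gt_of_ne hkl with h | h
    · exact hb.orthX hC h0 (k := k) (l := l) h (by omega) (hx k) (hx l)
    · rw [inner_eq_zero_symm]
      exact hb.orthX hC h0 (k := l) (l := k) h (by omega) (hx l) (hx k)
  · intro k l hkl
    rcases lt_or_gt_of_ne hkl with h | h
    · exact hb.orthF hC h0 (k := k) (l := l) h (by omega) (hf k) (hf l)
    · rw [inner_eq_zero_symm]
      exact hb.orthF hC h0 (k := l) (l := k) h (by omega) (hf l) (hf k)
  · intro k
    exact aux_rankOne_mem (hx1 k) (hf k)
  · intro k
    exact aux_rankOne_mem (hx3 k) (hf k)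
  · intro k
    rw [(p _).eq _ (hx1 k) _ (hf k), (hb.step (2 * k) (by omega)).2 _ (hx k) (hx1 k)]
  · intro k
    rw [(p _).eq _ (hx3 k) _ (hf k)]
    congr 1
    by_cases hk : k = Fin.last m
    · subst hk
      simp only [if_true, Fin.last_add_one]
      exact hc _ (hx 0)
    · have hkm := hlt k hk
      simp only [hk, if_false, one_smul]
      have h1 : ((k + 1 : Fin (m + 1)) : ℕ) = k + 1 := by
        rw [Fin.val_add_one, if_neg hk]
      rw [h1]
      exact (hb.step (2 * k + 1) (by omega)).2 _ (hx3 k) (hx2 k hk)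
  · intro k hk
    simp [hk]

theorem AuxBad.false (hC : AuxCtx L Φ) {n : ℕ} {p : ℕ → AuxFrame L Φ} (hb : AuxBad n p) :
    False := by
  have hn := hb.hn
  rcases (hb.step 0 (by omega)).1 with h | h
  · exact hb.false1 hC h
  · refine hb.rev.false1 hC ?_
    have h1 := (hb.step (n - 1) (by omega)).1
    simp only [Nat.sub_zero]
    rw [show n - 1 + 1 = n by omega] at h1
    rcases h1 with h1 | h1
    · exfalso
      rcases hb.comp with h2 | h2
      · exact hb.chord (i := 1) (j := n) (by omega) le_rfl (by omega) (Or.inl (h.trans h2))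
      · exact hb.chord (i := 0) (j := n - 1) (by omega) (by omega) (by omega)
          (Or.inr (h1.trans h2))
    · exact h1

theorem aux_flat (hC : AuxCtx L Φ) (n : ℕ) : ∀ a b : AuxFrame L Φ, AuxPath n a b →
    Comparable' a.M b.M → AuxCompat a b := by
  induction n using Nat.strong_induction_on with
  | _ n IH =>
    intro a b hp hc
    by_contra hbad
    obtain ⟨p, rfl, rfl, hs⟩ := hp.fn
    have hn : 3 ≤ n := by
      by_contra hlt
      have : n = 0 ∨ n = 1 ∨ n = 2 := by omega
      rcases this with rfl | rfl | rfl
      · exact hbad (aux_compat_refl _)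
      · exact hbad (hs 0 (by omega))
      · exact hbad (aux_triangle hC (hs 0 (by omega)) (hs 1 (by omega)) hc)
    exact AuxBad.false hC ⟨hn, hs, hc, hbad, IH⟩

theorem AuxPath.rev {a b : AuxFrame L Φ} {n : ℕ} (h : AuxPath n a b) : AuxPath n b a := by
  induction n generalizing b with
  | zero => exact Eq.symm h
  | succ n ih =>
    obtain ⟨d, hd, he⟩ := h
    have := (AuxPath.one he.symm').trans' (ih hd)
    rwa [Nat.add_comm] at this

theorem aux_chain (hC : AuxCtx L Φ) (p : AuxFrame L Φ) {M : Submodule ℂ H}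
    (h : ChainConn L p.M M) : ∃ n, ∃ q : AuxFrame L Φ, q.M = M ∧ AuxPath n p q := by
  obtain ⟨n, c, hc, h0, h1, hs⟩ := h
  have key : ∀ k : Fin (n + 1), ∃ q : AuxFrame L Φ, q.M = c k ∧ AuxPath k p q := by
    intro k
    induction k using Fin.induction with
    | zero => exact ⟨p, h0.symm, rfl⟩
    | succ i ih =>
      obtain ⟨q, hq, hp⟩ := ih
      obtain ⟨r, hr, hqr⟩ := aux_frame_exists' hC q (hc i.succ) (by rw [hq]; exact hs i)
      exact ⟨r, hr, q, by simpa using hp, hqr⟩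
  obtain ⟨q, hq, hp⟩ := key (Fin.last n)
  exact ⟨_, q, hq.trans h1, hp⟩

theorem aux_global (hC : AuxCtx L Φ) (hirr : ∃ N ∈ famF L, GSet L N = famF L) :
    ∃ P : famF L → AuxFrame L Φ, (∀ M, (P M).M = M) ∧
      ∀ M N : famF L, Comparable' (M : Submodule ℂ H) N → AuxCompat (P M) (P N) := by
  obtain ⟨N, hN, hG⟩ := hirr
  obtain ⟨p, rfl⟩ := aux_frame_exists hC hN
  have : ∀ M : famF L, ∃ q : AuxFrame L Φ, q.M = M ∧ ∃ n, AuxPath n p q := by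
    intro M
    have hM : (M : Submodule ℂ H) ∈ GSet L p.M := by rw [hG]; exact M.2
    obtain ⟨n, q, hq, hp⟩ := aux_chain hC p hM.2
    exact ⟨q, hq, n, hp⟩
  choose P hP hn using this
  refine ⟨P, hP, fun M N h => ?_⟩
  obtain ⟨m, hm⟩ := hn M
  obtain ⟨n, hn⟩ := hn N
  exact aux_flat hC _ _ _ (hm.rev.trans' hn) (by rw [hP, hP]; exact h)

end PartE


section PartF

variable {H : Type*} [NormedAddCommGroup H] [InnerProductSpace ℂ H]

theorem aux_glue {ι : Type*} (S : ι → Submodule ℂ H) (T P : ι → H →ₗ[ℂ] H)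
    (hP : ∀ a i, ∀ x ∈ S i, P a x ∈ S i) (hPa : ∀ a x, P a x ∈ S a)
    (hPid : ∀ a, ∀ x ∈ S a, P a x = x)
    (hT : ∀ i j x, x ∈ S i → x ∈ S j → T i x = T j x) (s : Finset ι) :
    ∀ x : ι → H, (∀ i ∈ s, x i ∈ S i) → ∑ i ∈ s, x i = 0 → ∑ i ∈ s, T i (x i) = 0 := by
  classical
  induction s using Finset.induction_on with
  | empty => intro x _ _; simp
  | insert a s ha ih =>
    intro x hx h0
    rw [Finset.sum_insert ha] at h0 ⊢
    have hxa := hx a (Finset.mem_insert_self a s)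
    have hxs : ∀ i ∈ s, x i ∈ S i := fun i hi => hx i (Finset.mem_insert_of_mem hi)
    have h1 : x a + ∑ i ∈ s, P a (x i) = 0 := by
      have := congrArg (P a) h0
      rwa [map_add, map_sum, hPid a _ hxa, map_zero] at this
    have h2 : T a (x a) + ∑ i ∈ s, T i (P a (x i)) = 0 := by
      have := congrArg (T a) h1
      rw [map_add, map_sum, map_zero] at this
      rw [← this]
      congr 1
      exact Finset.sum_congr rfl (fun i hi => hT i a _ (hP a i _ (hxs i hi)) (hPa a _))
    have h3 := ih (fun i => x i - P a (x i))
      (fun i hi => (S i).sub_mem (hxs i hi) (hP a i _ (hxs i hi))) (by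
        rw [Finset.sum_sub_distrib, sub_eq_zero]
        exact add_left_cancel (h0.trans h1.symm))
    simp only [map_sub, Finset.sum_sub_distrib] at h3
    rw [sub_eq_zero] at h3
    rw [h3]
    exact h2

theorem aux_pmap {ι : Type*} (S : ι → Submodule ℂ H) (T P : ι → H →ₗ[ℂ] H)
    (hP : ∀ a i, ∀ x ∈ S i, P a x ∈ S i) (hPa : ∀ a x, P a x ∈ S a)
    (hPid : ∀ a, ∀ x ∈ S a, P a x = x)
    (hT : ∀ i j x, x ∈ S i → x ∈ S j → T i x = T j x) :
    ∃ U : H →ₗ.[ℂ] H, ∀ i, ∀ x ∈ S i, ∃ h : x ∈ U.domain, U ⟨x, h⟩ = T i x := by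
  let g : Submodule ℂ (H × H) := ⨆ i, (S i).map ((LinearMap.id : H →ₗ[ℂ] H).prod (T i))
  have hg : ∀ (x : H × H) (_hx : x ∈ g) (_hx' : x.fst = 0), x.snd = 0 := by
    intro x hx hx0
    obtain ⟨f, hf, rfl⟩ := (Submodule.mem_iSup_iff_exists_finsupp _ _).1 hx
    have hf1 : ∀ i, (f i).1 ∈ S i ∧ T i (f i).1 = (f i).2 := by
      intro i
      obtain ⟨y, hy, he⟩ := hf i
      rw [← he]
      exact ⟨hy, rfl⟩
    rw [Finsupp.sum] at hx0 ⊢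
    rw [Prod.fst_sum] at hx0
    rw [Prod.snd_sum]
    have := aux_glue S T P hP hPa hPid hT f.support (fun i => (f i).1) (fun i _ => (hf1 i).1) hx0
    rw [← this]
    exact Finset.sum_congr rfl (fun i _ => (hf1 i).2.symm)
  refine ⟨g.toLinearPMap, fun i x hx => ?_⟩
  have hm : (x, T i x) ∈ g.toLinearPMap.graph := by
    rw [Submodule.toLinearPMap_graph_eq g hg]
    exact Submodule.mem_iSup_of_mem i ⟨x, hx, rfl⟩
  rw [LinearPMap.mem_graph_iff] at hm
  obtain ⟨y, hy, he⟩ := hm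
  simp only at hy he
  subst hy
  exact ⟨y.2, he⟩

variable [CompleteSpace H] {L : Set (Submodule ℂ H)} {Φ : (H →L[ℂ] H) → (H →L[ℂ] H)}

/-- the rank one subspace -/
def auxR1 (L : Set (Submodule ℂ H)) : Submodule ℂ (H →L[ℂ] H) :=
  Submodule.span ℂ {T | ∃ M ∈ famF L, ∃ x ∈ M, ∃ f ∈ (minus L M)ᗮ, T = rankOne x f}

theorem aux_approx [TopologicalSpace.SeparableSpace H] (hL : IsCSL L)
    (hcd : IsCompletelyDistributive L) {A : H →L[ℂ] H} (hA : A ∈ algL L) (s : Finset (H × H)) :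
    ∃ R ∈ auxR1 L, ∀ q ∈ s, (inner ℂ q.2 (R q.1) : ℂ) = inner ℂ q.2 (A q.1) := by
  let q : Fin s.card → H × H := fun i => (s.equivFin.symm i : H × H)
  let Λ : (H →L[ℂ] H) →ₗ[ℂ] (Fin s.card → ℂ) :=
    { toFun := fun T i => inner ℂ (q i).2 (T (q i).1)
      map_add' := fun S T => by ext i; simp [inner_add_right]
      map_smul' := fun c T => by ext i; simp [inner_smul_right] }
  have hΛ : ∀ T i, Λ T i = inner ℂ (q i).2 (T (q i).1) := fun _ _ => rfl
  have key : Λ A ∈ (auxR1 L).map Λ := by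
    by_contra hn
    obtain ⟨φ, hφ, hker⟩ := Submodule.exists_le_ker_of_notMem hn
    apply hφ
    let c : Fin s.card → ℂ := fun i => φ (Pi.single i 1)
    have hφc : ∀ z, φ z = ∑ i, z i * c i := by
      intro z
      conv_lhs => rw [LinearMap.pi_apply_eq_sum_univ φ z]
      refine Finset.sum_congr rfl (fun i _ => ?_)
      rw [smul_eq_mul]
      congr 2
      ext j
      simp [Pi.single_apply, eq_comm]
    let ξ : Fin s.card → H := fun i => (q i).1
    let η : Fin s.card → H := fun i => (starRingEnd ℂ (c i)) • (ContinuousLinearMap.adjoint A) (q i).2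
    have hη : ∀ i y, (inner ℂ (η i) y : ℂ) = c i * inner ℂ (q i).2 (A y) := by
      intro i y
      simp only [η]
      rw [inner_smul_left, ContinuousLinearMap.adjoint_inner_left]
      simp
    have hAnn : AuxAnn L ξ η := by
      intro M hM y hy f hf
      by_cases hF : M ∈ famF L
      · have h1 : rankOne (A y) f ∈ auxR1 L :=
          Submodule.subset_span ⟨M, hF, A y, hA M hM y hy, f, hf, rfl⟩
        have h2 := hker ⟨_, h1, rfl⟩
        rw [LinearMap.mem_ker, hφc] at h2
        rw [← h2]
        refine Finset.sum_congr rfl (fun i _ => ?_)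
        rw [hη, hΛ, aux_rankOne_apply, inner_smul_right]
        ring
      · have : y = 0 ∨ f = 0 := by
          by_contra hne
          push Not at hne
          apply hF
          refine ⟨hM, ?_, ?_⟩
          · rintro rfl
            exact hne.1 (by simpa using hy)
          · intro h
            rw [h] at hf
            exact hne.2 (by simpa using hf)
        rcases this with rfl | rfl <;> simp
    have := aux_trace hL hcd ξ η hAnn
    rw [hφc, ← this]
    refine Finset.sum_congr rfl (fun i _ => ?_)
    rw [hη, hΛ, mul_comm]
  obtain ⟨R, hR, hRA⟩ := key
  refine ⟨R, hR, fun w hw => ?_⟩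
  have := congrFun hRA (s.equivFin ⟨w, hw⟩)
  simpa [hΛ, q] using this

theorem aux_R1_alg : ∀ R ∈ auxR1 L, R ∈ algL L := by
  intro R hR
  induction hR using Submodule.span_induction with
  | mem T hT =>
    obtain ⟨M, hM, x, hx, f, hf, rfl⟩ := hT
    exact aux_rankOne_mem hx hf
  | zero => exact aux_alg_zero L
  | add S T _ _ hS hT => exact aux_alg_add hS hT
  | smul c T _ hT => exact aux_alg_smul c hT

theorem aux_final [TopologicalSpace.SeparableSpace H] (hL : IsCSL L)
    (hcd : IsCompletelyDistributive L) (hlin : IsLinearOnAlg L Φ)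
    (hwot : WOTContinuousOn L Φ) {h k h' k' : H}
    (hr : ∀ M ∈ famF L, ∀ x ∈ M, ∀ f ∈ (minus L M)ᗮ,
      (inner ℂ k (Φ (rankOne x f) h) : ℂ) = inner ℂ k' (rankOne x f h'))
    {A : H →L[ℂ] H} (hA : A ∈ algL L) :
    (inner ℂ k (Φ A h) : ℂ) = inner ℂ k' (A h') := by
  have hR : ∀ R ∈ auxR1 L, (inner ℂ k (Φ R h) : ℂ) = inner ℂ k' (R h') := by
    intro R hR
    induction hR using Submodule.span_induction with
    | mem T hT =>
      obtain ⟨M, hM, x, hx, f, hf, rfl⟩ := hT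
      exact hr M hM x hx f hf
    | zero => rw [aux_phi_zero hlin]; simp
    | add S T hS hT eS eT =>
      rw [hlin.map_add _ (aux_R1_alg S hS) _ (aux_R1_alg T hT)]
      simp only [ContinuousLinearMap.add_apply, inner_add_right, eS, eT]
    | smul c T hT eT =>
      rw [hlin.map_smul _ _ (aux_R1_alg T hT)]
      simp only [ContinuousLinearMap.smul_apply, inner_smul_right, eT]
  choose R hR1 hRA using aux_approx hL hcd hA
  have hev : ∀ x y : H, ∀ᶠ s : Finset (H × H) in Filter.atTop,
      (inner ℂ y (R s x) : ℂ) = inner ℂ y (A x) := by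
    intro x y
    filter_upwards [Filter.eventually_ge_atTop {(x, y)}] with s hs
    exact hRA s (x, y) (hs (Finset.mem_singleton_self _))
  have ht : Filter.Tendsto (fun s => ContinuousLinearMapWOT.ofCLM (R s) : _ → H →WOT[ℂ] H)
      Filter.atTop (nhds (ContinuousLinearMapWOT.ofCLM A)) := by
    rw [ContinuousLinearMapWOT.tendsto_iff_forall_dual_apply_tendsto]
    intro x y
    obtain ⟨z, rfl⟩ := (InnerProductSpace.toDual ℂ H).surjective y
    refine tendsto_const_nhds.congr' ?_
    filter_upwards [hev x z] with s hs
    simpa using hs.symm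
  have ht2 := ((hwot _ ⟨A, hA, rfl⟩).tendsto).comp
    (tendsto_nhdsWithin_iff.2 ⟨ht, Filter.Eventually.of_forall
      (fun s => ⟨R s, aux_R1_alg _ (hR1 s), rfl⟩)⟩)
  have ht3 := (ContinuousLinearMapWOT.tendsto_iff_forall_dual_apply_tendsto.1 ht2) h
    (InnerProductSpace.toDual ℂ H k)
  have ht4 : Filter.Tendsto (fun s => (inner ℂ k (Φ (R s) h) : ℂ)) Filter.atTop
      (nhds (inner ℂ k (Φ A h))) := by simpa using ht3
  refine tendsto_nhds_unique ht4 (tendsto_const_nhds.congr' ?_)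
  filter_upwards [hev h' k'] with s hs
  rw [hR _ (hR1 s), hs]

end PartF


theorem stmt_14 {H : Type*} [NormedAddCommGroup H] [InnerProductSpace ℂ H]
    [CompleteSpace H] [TopologicalSpace.SeparableSpace H]
    (L : Set (Submodule ℂ H)) (hL : IsCSL L) (hcd : IsCompletelyDistributive L)
    (Φ : (H →L[ℂ] H) → (H →L[ℂ] H)) (hlin : IsLinearOnAlg L Φ)
    (hwot : WOTContinuousOn L Φ) (hrank : RankPreserving L Φ)
    (hcons : ∀ N ∈ famF L, Consistent L Φ N)
    (hirr : ∃ N ∈ famF L, GSet L N = famF L) :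
    ∃ U V : H →ₗ.[ℂ] H,
      Dense (U.domain : Set H) ∧ Dense (V.domain : Set H) ∧
      (∀ (x : U.domain) (f : V.domain) (M : Submodule ℂ H), M ∈ famF L →
          (x : H) ∈ M → (f : H) ∈ (minus L M)ᗮ →
          Φ (rankOne (x : H) (f : H)) = rankOne (U x) (V f)) ∧
      (∀ A ∈ algL L, ∀ (h : V.adjoint.domain) (k : U.adjoint.domain),
          (inner ℂ (Φ A (h : H)) (k : H) : ℂ)
            = inner ℂ (A ((V.adjoint h : H))) ((U.adjoint k : H))) := by

  have hC : AuxCtx L Φ := ⟨hL, hlin, hrank, hcons⟩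
  have hl := hL.toIsSubspaceLattice
  obtain ⟨P, hPM, hPc⟩ := aux_global hC hirr
  obtain ⟨U, hU⟩ := aux_pmap (ι := famF L) (fun M => (M : Submodule ℂ H)) (fun M => (P M).W)
    (fun M => ((projOf (M : Submodule ℂ H) : H →L[ℂ] H) : H →ₗ[ℂ] H))
    (fun a i x hx => aux_proj_mem' hL a.2.1 i.2.1 hx)
    (fun a x => aux_proj_mem (hL.isClosed _ a.2.1) x)
    (fun a x hx => (aux_proj_self (hL.isClosed _ a.2.1)).2 hx)
    (by
      intro M N x hx hy
      by_cases hx0 : x = 0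
      · simp [hx0]
      have hK : (M : Submodule ℂ H) ⊓ N ∈ famF L := aux_famF_inf hl M.2 N.2
        ((Submodule.ne_bot_iff _).2 ⟨x, ⟨hx, hy⟩, hx0⟩)
      have e1 := (hPc ⟨_, hK⟩ M (Or.inl inf_le_left)).2 x (by rw [hPM]; exact ⟨hx, hy⟩)
        (by rw [hPM]; exact hx)
      have e2 := (hPc ⟨_, hK⟩ N (Or.inl inf_le_right)).2 x (by rw [hPM]; exact ⟨hx, hy⟩)
        (by rw [hPM]; exact hy)
      exact e1.symm.trans e2)
  obtain ⟨V, hV⟩ := aux_pmap (ι := famF L) (fun M => (minus L (M : Submodule ℂ H))ᗮ)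
    (fun M => (P M).V)
    (fun M => LinearMap.id - ((projOf (minus L (M : Submodule ℂ H)) : H →L[ℂ] H) : H →ₗ[ℂ] H))
    (fun a i x hx => Submodule.sub_mem _ hx
      (aux_proj_mem_orth hL (aux_minus_mem hl _) (aux_minus_mem hl _) hx))
    (fun a x => aux_proj_sub (hL.isClosed _ (aux_minus_mem hl _)) x)
    (fun a x hx => by
      have := (aux_proj_zero (hL.isClosed _ (aux_minus_mem hl (a : Submodule ℂ H)))).2 hx
      simp [this])
    (by
      intro M N f hf hg
      by_cases hf0 : f = 0
      · simp [hf0]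
      have hK : closedJoin {(M : Submodule ℂ H), (N : Submodule ℂ H)} ∈ famF L :=
        aux_famF_join hl M.2 N.2 ((Submodule.ne_bot_iff _).2 ⟨f, ⟨hf, hg⟩, hf0⟩)
      have hfK := aux_minus_join hl (M := (M : Submodule ℂ H)) (N := N) ⟨hf, hg⟩
      have e1 := aux_compat_V hC (hPc M ⟨_, hK⟩ (Or.inl (aux_le_join (by simp)))) (f := f)
        (by rw [hPM]; exact hf) (by rw [hPM]; exact hfK)
      have e2 := aux_compat_V hC (hPc N ⟨_, hK⟩ (Or.inl (aux_le_join (by simp)))) (f := f)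
        (by rw [hPM]; exact hg) (by rw [hPM]; exact hfK)
      exact e1.trans e2.symm)
  have hUd : Dense (U.domain : Set H) := by
    rw [Submodule.dense_iff_topologicalClosure_eq_top, ← top_le_iff, ← aux_dense_U hl hcd]
    exact Submodule.topologicalClosure_mono
      (sSup_le (fun M hM x hx => (hU ⟨M, hM⟩ x hx).1))
  have hVd : Dense (V.domain : Set H) := by
    rw [Submodule.dense_iff_topologicalClosure_eq_top, Submodule.topologicalClosure_eq_top_iff,
      Submodule.eq_bot_iff]
    intro x hx
    refine aux_dense_V hl hcd (fun M hM => ?_)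
    have hle : (minus L M)ᗮ ≤ V.domain := fun f hf => (hV ⟨M, hM⟩ f hf).1
    have hc : CompleteSpace (minus L M) :=
      (hL.isClosed _ (aux_minus_mem hl M)).completeSpace_coe
    have := Submodule.orthogonal_le hle hx
    rwa [Submodule.orthogonal_orthogonal] at this
  have hi : ∀ (x : U.domain) (f : V.domain) (M : Submodule ℂ H), M ∈ famF L →
      (x : H) ∈ M → (f : H) ∈ (minus L M)ᗮ →
      Φ (rankOne (x : H) (f : H)) = rankOne (U x) (V f) := by
    intro x f M hM hx hf
    obtain ⟨_, e1⟩ := hU ⟨M, hM⟩ x hx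
    obtain ⟨_, e2⟩ := hV ⟨M, hM⟩ f hf
    have e1' : U x = (P ⟨M, hM⟩).W x := e1
    have e2' : V f = (P ⟨M, hM⟩).V f := e2
    rw [e1', e2']
    exact (P ⟨M, hM⟩).eq x (by rw [hPM]; exact hx) f (by rw [hPM]; exact hf)
  refine ⟨U, V, hUd, hVd, hi, ?_⟩
  intro A hA h k
  rw [← inner_conj_symm, ← inner_conj_symm (A _)]
  congr 1
  refine aux_final hL hcd hlin hwot ?_ hA
  intro M hM x hx f hf
  obtain ⟨hxU, -⟩ := hU ⟨M, hM⟩ x hx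
  obtain ⟨hfV, -⟩ := hV ⟨M, hM⟩ f hf
  rw [hi ⟨x, hxU⟩ ⟨f, hfV⟩ M hM hx hf, aux_rankOne_apply, aux_rankOne_apply,
    inner_smul_right, inner_smul_right]
  have a1 := (LinearPMap.adjoint_isFormalAdjoint hVd).symm ⟨f, hfV⟩ h
  have a2 := (LinearPMap.adjoint_isFormalAdjoint hUd) k ⟨x, hxU⟩
  rw [a1, a2]
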